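/- If G is a finite or infinite connected graph on at least 6 vertices, then there exists an edge colouring of G with 2 colours that breaks every small automorphism of G; i.e., the small distinguishing index D'_s(G) is at most 2. -/

import Mathlib

open SimpleGraph

/-- An edge colouring `c` preserves an automorphism `φ` if every edge is mapped
to an edge of the same colour. -/
def Preserves {V C : Type*} (G : SimpleGraph V) (c : Sym2 V → C) (φ : G ≃g G) : Prop :=
  ∀ u v : V, G.Adj u v → c s(φ u, φ v) = c s(u, v)

/-- An edge colouring `c` breaks an automorphism `φ` if it does not preserve it. -/
def Breaks {V C : Type*} (G : SimpleGraph V) (c : Sym2 V → C) (φ : G ≃g G) : Prop :=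
  ¬ Preserves G c φ

/-- An automorphism is small if it moves some vertex to a neighbour. -/
def IsSmall {V : Type*} (G : SimpleGraph V) (φ : G ≃g G) : Prop :=
  ∃ v : V, G.Adj v (φ v)

universe u

/-- The parity of an ordinal; it changes at every successor. -/
noncomputable def Ordinal.parity (o : Ordinal.{u}) : Bool :=
  Ordinal.limitRecOn (motive := fun _ => Bool) o false (fun _ b => !b) (fun _ _ _ => false)

namespace SmallIndex

variable {V : Type u}

theorem parity_zero : Ordinal.parity (0 : Ordinal.{u}) = false := by
  simp [Ordinal.parity]

theorem parity_add_one (o : Ordinal.{u}) : (o + 1).parity = !o.parity := by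
  rw [Ordinal.parity, Ordinal.parity]
  exact Ordinal.limitRecOn_add_one ..

/-- A colouring of the vertices of `H` by ordinals as produced by the greedy algorithm. -/
structure IsGreedy (H : SimpleGraph V) (f : V → Ordinal.{u}) : Prop where
  proper : ∀ u v, H.Adj u v → f u ≠ f v
  exists_adj : ∀ v, ∀ b < f v, ∃ u, H.Adj v u ∧ f u = b

theorem exists_isGreedy (H : SimpleGraph V) : ∃ f : V → Ordinal.{u}, IsGreedy H f := by
  let F : ∀ v : V, (∀ u, WellOrderingRel u v → Ordinal.{u}) → Ordinal.{u} := fun v ih =>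
    sInf {b | ∀ u (h : WellOrderingRel u v), H.Adj v u → ih u h ≠ b}
  have wf : WellFounded (WellOrderingRel : V → V → Prop) := IsWellFounded.wf
  let f : V → Ordinal.{u} := wf.fix F
  have hf : ∀ v, f v = sInf {b | ∀ u, WellOrderingRel u v → H.Adj v u → f u ≠ b} := fun v =>
    wf.fix_eq F v
  have hmem : ∀ v, ∀ u, WellOrderingRel u v → H.Adj v u → f u ≠ f v := by
    intro v
    have : f v ∈ {b | ∀ u, WellOrderingRel u v → H.Adj v u → f u ≠ b} := by
      rw [hf v]
      apply csInf_mem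
      obtain ⟨b, hb⟩ := Ordinal.bddAbove_of_small (s := Set.range f)
      refine ⟨b + 1, fun u _ _ h => ?_⟩
      have := hb ⟨u, rfl⟩
      rw [h] at this
      exact absurd this (not_le.2 (lt_add_one b))
    exact this
  refine ⟨f, fun u v h => ?_, fun v b hb => ?_⟩
  · rcases trichotomous_of WellOrderingRel u v with h' | h' | h'
    · exact hmem v u h' h.symm
    · exact absurd h' h.ne
    · exact (hmem u v h' h).symm
  · by_contra! hcon
    rw [hf v] at hb
    exact notMem_of_lt_csInf hb (OrderBot.bddBelow _) fun u _ h => hcon u h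

/-- The red edges between classes of different parity: the even end comes later. -/
def OrderRed (f : V → Ordinal.{u}) (u v : V) : Prop :=
  ((f u).parity = false ∧ (f v).parity = true ∧ f v < f u) ∨
    ((f v).parity = false ∧ (f u).parity = true ∧ f u < f v)

theorem OrderRed.symm {f : V → Ordinal.{u}} {u v : V} (h : OrderRed f u v) : OrderRed f v u :=
  Or.symm h

theorem not_orderRed_of_eq_zero {f : V → Ordinal.{u}} {u v : V} (h : f u = 0) :
    ¬ OrderRed f u v := by
  rintro (⟨-, -, h3⟩ | ⟨-, h2, -⟩)
  · rw [h] at h3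
    exact not_lt_bot h3
  · rw [h, parity_zero] at h2
    cases h2

theorem not_orderRed_of_parity_eq {f : V → Ordinal.{u}} {u v : V}
    (h : (f u).parity = (f v).parity) : ¬ OrderRed f u v := by
  rintro (⟨h1, h2, -⟩ | ⟨h1, h2, -⟩) <;> rw [h1, h2] at h <;> cases h

theorem IsGreedy.not_apply_lt {H : SimpleGraph V} {f : V → Ordinal.{u}} (hf : IsGreedy H f)
    (φ : V ≃ V) (hadj : ∀ u v, H.Adj (φ u) (φ v) ↔ H.Adj u v)
    (hpar : ∀ v, (f (φ v)).parity = (f v).parity)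
    (hred : ∀ u v, H.Adj u v → (OrderRed f (φ u) (φ v) ↔ OrderRed f u v)) (v : V) :
    ¬ f (φ v) < f v := by
  induction hv : f v using WellFoundedLT.induction generalizing v with
  | ind o ih =>
    subst hv
    intro hlt
    have hle : f (φ v) + 1 ≤ f v := Order.add_one_le_of_lt hlt
    have hne : f (φ v) + 1 ≠ f v := by
      intro h
      have h1 := parity_add_one (f (φ v))
      rw [h, hpar v] at h1
      cases h2 : (f v).parity <;> simp [h2] at h1
    obtain ⟨u, hu, hfu⟩ := hf.exists_adj v _ (lt_of_le_of_ne hle hne)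
    have hparu : (f u).parity = !(f v).parity := by rw [hfu, parity_add_one, hpar]
    have hltu : f u < f v := hfu ▸ lt_of_le_of_ne hle hne
    have key : f (φ u) < f (φ v) := by
      have hneq : f (φ u) ≠ f (φ v) := (hf.proper _ _ ((hadj v u).2 hu)).symm
      have hr := hred v u hu
      unfold OrderRed at hr
      rw [hpar, hpar, hparu] at hr
      cases h2 : (f v).parity
      · simp [h2, hltu] at hr
        exact hr
      · simp [h2] at hr
        exact lt_of_le_of_ne (not_lt.1 fun h => absurd (hr.1 h) hltu.not_gt) hneq
    refine ih (f u) hltu u rfl ?_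
    rw [hfu]
    exact key.trans (lt_add_one _)

theorem IsGreedy.apply_eq {H : SimpleGraph V} {f : V → Ordinal.{u}} (hf : IsGreedy H f)
    (φ : V ≃ V) (hadj : ∀ u v, H.Adj (φ u) (φ v) ↔ H.Adj u v)
    (hpar : ∀ v, (f (φ v)).parity = (f v).parity)
    (hred : ∀ u v, H.Adj u v → (OrderRed f (φ u) (φ v) ↔ OrderRed f u v)) (v : V) :
    f (φ v) = f v := by
  refine le_antisymm ?_ (not_lt.1 (hf.not_apply_lt φ hadj hpar hred v))
  have := hf.not_apply_lt φ.symm (fun a b => by rw [← hadj]; simp)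
    (fun a => by rw [← hpar]; simp)
    (fun a b hab => by
      rw [← hred _ _ (by rw [← hadj]; simpa using hab)]; simp) (φ v)
  simpa using this

/-- The distance of `v` from the set `A` in `H`. -/
noncomputable def lay (H : SimpleGraph V) (A : Set V) (v : V) : ℕ :=
  sInf {n | ∃ a ∈ A, ∃ w : H.Walk a v, w.length = n}

theorem exists_walk_lay {H : SimpleGraph V} {A : Set V} (hA : ∀ v, ∃ a ∈ A, H.Reachable a v)
    (v : V) : ∃ a ∈ A, ∃ w : H.Walk a v, w.length = lay H A v := by
  obtain ⟨a, ha, ⟨w⟩⟩ := hA v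
  exact Nat.sInf_mem (s := {n | ∃ a ∈ A, ∃ w : H.Walk a v, w.length = n})
    ⟨w.length, a, ha, w, rfl⟩

theorem lay_le {H : SimpleGraph V} {A : Set V} {a v : V} (ha : a ∈ A) (w : H.Walk a v) :
    lay H A v ≤ w.length :=
  Nat.sInf_le ⟨a, ha, w, rfl⟩

theorem lay_eq_zero {H : SimpleGraph V} {A : Set V} (hA : ∀ v, ∃ a ∈ A, H.Reachable a v)
    {v : V} : lay H A v = 0 ↔ v ∈ A := by
  constructor
  · intro h
    obtain ⟨a, ha, w, hw⟩ := exists_walk_lay hA v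
    rw [h] at hw
    rwa [← w.eq_of_length_eq_zero hw]
  · intro h
    exact Nat.le_zero.1 (lay_le h (SimpleGraph.Walk.nil : H.Walk v v))

theorem lay_le_add_one {H : SimpleGraph V} {A : Set V} (hA : ∀ v, ∃ a ∈ A, H.Reachable a v)
    {u v : V} (h : H.Adj u v) : lay H A v ≤ lay H A u + 1 := by
  obtain ⟨a, ha, w, hw⟩ := exists_walk_lay hA u
  simpa [hw] using lay_le ha (w.concat h)

theorem exists_adj_lay {H : SimpleGraph V} {A : Set V} (hA : ∀ v, ∃ a ∈ A, H.Reachable a v)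
    {v : V} {n : ℕ} (h : lay H A v = n + 1) : ∃ u, H.Adj v u ∧ lay H A u = n := by
  obtain ⟨a, ha, w, hw⟩ := exists_walk_lay hA v
  rw [h] at hw
  obtain ⟨u, p, e, hp⟩ : ∃ u, ∃ _ : H.Walk a u, H.Adj u v ∧ (‹H.Walk a u›).length = n := by
    cases hr : w.reverse with
    | nil => simpa [hw] using congrArg SimpleGraph.Walk.length hr
    | cons e p =>
      refine ⟨_, p.reverse, e.symm, ?_⟩
      have := congrArg SimpleGraph.Walk.length hr
      simp [hw] at this
      simp [this]
  refine ⟨u, e.symm, le_antisymm (hp ▸ lay_le ha p) ?_⟩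
  have := lay_le_add_one hA e
  omega

theorem lay_apply_le {H : SimpleGraph V} {A : Set V} (hA : ∀ v, ∃ a ∈ A, H.Reachable a v)
    {φ : V ≃ V} (hadj : ∀ u v, H.Adj (φ u) (φ v) ↔ H.Adj u v)
    (hφA : ∀ v, φ v ∈ A ↔ v ∈ A) (v : V) : lay H A (φ v) ≤ lay H A v := by
  obtain ⟨a, ha, w, hw⟩ := exists_walk_lay hA v
  let g : H →g H := ⟨φ, fun h => (hadj _ _).2 h⟩
  rw [← hw, ← w.length_map g]
  exact lay_le ((hφA a).2 ha) (w.map g)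

theorem lay_apply {H : SimpleGraph V} {A : Set V} (hA : ∀ v, ∃ a ∈ A, H.Reachable a v)
    {φ : V ≃ V} (hadj : ∀ u v, H.Adj (φ u) (φ v) ↔ H.Adj u v)
    (hφA : ∀ v, φ v ∈ A ↔ v ∈ A) (v : V) : lay H A (φ v) = lay H A v := by
  refine le_antisymm (lay_apply_le hA hadj hφA v) ?_
  have := lay_apply_le hA (φ := φ.symm) (fun a b => by rw [← hadj]; simp)
    (fun a => by rw [← hφA]; simp) (φ v)
  simpa using this

theorem lay_adj {H : SimpleGraph V} {A : Set V} (hA : ∀ v, ∃ a ∈ A, H.Reachable a v)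
    {u v : V} (h : H.Adj u v) : lay H A u = lay H A v ∨ lay H A u = lay H A v + 1 ∨
      lay H A v = lay H A u + 1 := by
  have := lay_le_add_one hA h
  have := lay_le_add_one hA h.symm
  omega

/-- No bijection that respects the graph `H`, its colouring `d` and the set `R` moves a vertex to
a neighbour in `H`. -/
def Rigid (H : SimpleGraph V) (R : Set V) (d : V → V → Prop) : Prop :=
  ∀ φ : V ≃ V, (∀ u v, H.Adj (φ u) (φ v) ↔ H.Adj u v) →
    (∀ u v, H.Adj u v → (d (φ u) (φ v) ↔ d u v)) → (∀ v, φ v ∈ R ↔ v ∈ R) →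
    ∀ v, ¬ H.Adj v (φ v)

/-- The edges of `H` inside the level sets of `j`. -/
def sameLevel (H : SimpleGraph V) (j : V → ℕ) : SimpleGraph V where
  Adj u v := H.Adj u v ∧ j u = j v
  symm := ⟨fun _ _ h => ⟨h.1.symm, h.2.symm⟩⟩
  loopless := ⟨fun _ h => h.1.ne rfl⟩

theorem eq_of_parity_iff {a b : Bool} (h : a = true ↔ b = true) : a = b := by
  cases a <;> cases b <;> simp_all

theorem not_orderRed_triangle {f : V → Ordinal.{u}} {a b c : V} (hab : OrderRed f a b)
    (hbc : OrderRed f b c) (hac : OrderRed f a c) : False := by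
  have h1 : (f a).parity ≠ (f b).parity := fun h => not_orderRed_of_parity_eq h hab
  have h2 : (f b).parity ≠ (f c).parity := fun h => not_orderRed_of_parity_eq h hbc
  have h3 : (f a).parity ≠ (f c).parity := fun h => not_orderRed_of_parity_eq h hac
  revert h1 h2 h3
  cases (f a).parity <;> cases (f b).parity <;> cases (f c).parity <;> simp

theorem exists_rigid_of_section (H : SimpleGraph V) (R : Set V)
    (hR : ∀ v, ∃ a ∈ R, H.Reachable a v)
    (hR' : ∀ u ∈ R, ∀ v ∈ R, H.Reachable u v → u = v) :
    ∃ d : V → V → Prop, (∀ u v, d u v → d v u) ∧ Rigid H R d ∧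
      (∀ v t, t ∈ R → H.Adj v t → d v t → ∃ w, w ∉ R ∧ H.Adj v w ∧ H.Adj w t ∧ ¬ d v w ∧
        ∀ t', H.Adj v t' → H.Adj t' w → ¬ (d v t' ∧ d t' w)) ∧
      (∀ v ∈ R, (∃ u, H.Adj v u) → ∃ w, H.Adj v w ∧ ¬ d v w ∧
        ∀ t, H.Adj v t → H.Adj t w → ¬ (d v t ∧ d t w)) ∧
      (∀ a b c, H.Adj a b → H.Adj b c → H.Adj a c → ¬ (d a b ∧ d b c ∧ d a c)) := by
  set j := lay H R with hj
  obtain ⟨f, hf⟩ := exists_isGreedy (sameLevel H j)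
  have hq : ∀ v, ∃ u, j v ≠ 0 → H.Adj v u ∧ j v = j u + 1 := by
    intro v
    by_cases h : j v = 0
    · exact ⟨v, fun h' => absurd h h'⟩
    · obtain ⟨n, hn⟩ := Nat.exists_eq_succ_of_ne_zero h
      obtain ⟨u, hu, hu'⟩ := exists_adj_lay hR hn
      exact ⟨u, fun _ => ⟨hu, by rw [hj, hu', ← hj]; exact hn⟩⟩
  choose q hq using hq
  have jR : ∀ v, j v = 0 ↔ v ∈ R := fun v => lay_eq_zero hR
  have f_zero : ∀ u, u ∈ R → f u = 0 := by
    intro u hu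
    by_contra h
    obtain ⟨u', hu', -⟩ := hf.exists_adj u 0 (pos_iff_ne_zero.2 h)
    have : u' ∈ R := (jR u').1 (hu'.2 ▸ (jR u).2 hu)
    exact hu'.1.ne (hR' u hu u' this hu'.1.reachable)
  have pz : ∀ u, f u = 0 → (f u).parity = false := fun u h => by rw [h, parity_zero]
  have adj_root : ∀ u v, u ∈ R → H.Adj u v → j v = 1 := by
    intro u v hu h
    have h1 := (jR u).2 hu
    have h2 : j v ≤ j u + 1 := lay_le_add_one hR h
    have h3 : j v ≠ 0 := fun h3 => h.ne (hR' u hu v ((jR v).1 h3) h.reachable)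
    omega
  have adj_root' : ∀ u v w, u ∈ R → H.Adj u v → H.Adj v w → j w = 1 → H.Adj w u := by
    intro u v w hu huv hvw hw
    obtain ⟨t, ht, ht'⟩ := exists_adj_lay hR hw
    have := hR' u hu t ((jR t).1 ht') ((huv.reachable.trans hvw.reachable).trans ht.reachable)
    rwa [this]
  let In : V → V → Prop := fun u v => j u = j v + 1 ∧ (f u).parity = true ∧ v = q u
  let d : V → V → Prop := fun u v => (j u = j v ∧ OrderRed f u v) ∨ In u v ∨ In v u
  have d_same : ∀ u v, j u = j v → (d u v ↔ OrderRed f u v) := by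
    intro u v h
    simp only [d, In, h]
    simp
  have d_down : ∀ u v, j u = j v + 1 → (d u v ↔ (f u).parity = true ∧ v = q u) := by
    intro u v h
    simp only [d, In, h]
    simp
    omega
  have dsymm : ∀ u v, d u v → d v u := by
    rintro u v (⟨h1, h2⟩ | h | h)
    · exact Or.inl ⟨h1.symm, h2.symm⟩
    · exact Or.inr (Or.inr h)
    · exact Or.inr (Or.inl h)
  have d_zero : ∀ t w, f w = 0 → d t w → j t = j w + 1 ∧ w = q t := by
    rintro t w hw (⟨h1, h2⟩ | h | h)
    · exact absurd h2.symm (not_orderRed_of_eq_zero hw)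
    · exact ⟨h.1, h.2.2⟩
    · have := h.2.1
      rw [pz w hw] at this
      cases this
  refine ⟨d, dsymm, ?_, ?_, ?_, ?_⟩
  · intro φ hadj hd hφR v hv
    have hjφ : ∀ v, j (φ v) = j v := lay_apply hR hadj hφR
    have char : ∀ v, (f v).parity = true ↔ ∃ u, H.Adj v u ∧ j v = j u + 1 ∧ d v u := by
      intro v
      constructor
      · intro h
        have h0 : j v ≠ 0 := fun h0 => by
          rw [pz v (f_zero v ((jR v).1 h0))] at h
          cases h
        have := hq v h0
        exact ⟨q v, this.1, this.2, (d_down _ _ this.2).2 ⟨h, rfl⟩⟩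
      · rintro ⟨u, -, h1, h2⟩
        exact ((d_down _ _ h1).1 h2).1
    have hpar : ∀ v, (f (φ v)).parity = (f v).parity := by
      intro v
      apply eq_of_parity_iff
      rw [char, char, φ.surjective.exists]
      refine exists_congr fun u => ?_
      rw [hadj, hjφ, hjφ]
      exact and_congr_right fun h => and_congr_right fun _ => hd _ _ h
    have hadj2 : ∀ u v, (sameLevel H j).Adj (φ u) (φ v) ↔ (sameLevel H j).Adj u v := by
      intro u v
      simp only [sameLevel, hadj, hjφ]
    refine hf.proper v (φ v) ⟨hv, (hjφ v).symm⟩ (hf.apply_eq φ hadj2 hpar ?_ v).symm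
    intro u v h
    rw [← d_same _ _ h.2, ← d_same _ _ (by rw [hjφ, hjφ, h.2])]
    exact hd _ _ h.1
  · intro v t ht hvt hd
    have hjv := adj_root t v ht hvt.symm
    have hjt := (jR t).2 ht
    have hodd := ((d_down v t (by omega)).1 hd).1
    obtain ⟨w, hw, hfw⟩ := hf.exists_adj v 0 (pos_iff_ne_zero.2 fun h => by
      rw [pz v h] at hodd
      cases hodd)
    have hjw : j w = 1 := hw.2 ▸ hjv
    refine ⟨w, fun h => ?_, hw.1, adj_root' t v w ht hvt.symm hw.1 hjw, fun h => ?_, ?_⟩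
    · have := (jR w).2 h
      omega
    · have := d_zero _ _ hfw h
      omega
    · rintro t' - - ⟨h1, h2⟩
      have h3 := d_zero _ _ hfw h2
      have h4 := (d_down t' v (by omega)).1 (dsymm _ _ h1)
      exact hw.1.ne (h4.2.trans h3.2.symm)
  · rintro v hv ⟨u, hu⟩
    have hju := adj_root v u hv hu
    have hjv := (jR v).2 hv
    obtain ⟨w, hw, hfw⟩ : ∃ w, H.Adj v w ∧ f w = 0 := by
      by_cases h : f u = 0
      · exact ⟨u, hu, h⟩
      · obtain ⟨w, hw, hfw⟩ := hf.exists_adj u 0 (pos_iff_ne_zero.2 h)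
        exact ⟨w, (adj_root' v u w hv hu hw.1 (hw.2 ▸ hju)).symm, hfw⟩
    have hjw := adj_root v w hv hw
    refine ⟨w, hw, fun h => ?_, ?_⟩
    · have := d_zero _ _ hfw h
      omega
    · rintro t ht - ⟨-, h2⟩
      have := d_zero _ _ hfw h2
      have := adj_root v t hv ht
      omega
  · rintro a b c hab hbc hac ⟨h1, h2, h3⟩
    have key : ∀ a b c, H.Adj a b → H.Adj b c → H.Adj a c → j a = j b → d a b → d b c →
        d a c → False := by
      intro a b c hab hbc hac hj1 h1 h2 h3
      have h1' := (d_same _ _ hj1).1 h1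
      rcases lay_adj hR hbc with h | h | h
      · have h2' := (d_same _ _ h).1 h2
        have h3' := (d_same _ _ (hj1.trans h)).1 h3
        exact not_orderRed_triangle h1' h2' h3'
      · have h2' := (d_down _ _ h).1 h2
        have h3' := (d_down _ _ (hj1.trans h)).1 h3
        exact not_orderRed_of_parity_eq (h3'.1.trans h2'.1.symm) h1'
      · have h2' := (d_down c b h).1 (dsymm _ _ h2)
        have h3' := (d_down c a (h.trans (by rw [← hj, hj1]))).1 (dsymm _ _ h3)
        exact hab.ne (h3'.2.trans h2'.2.symm)
    have l1 : j a = j b ∨ j a = j b + 1 ∨ j b = j a + 1 := lay_adj hR hab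
    have l2 : j b = j c ∨ j b = j c + 1 ∨ j c = j b + 1 := lay_adj hR hbc
    have l3 : j a = j c ∨ j a = j c + 1 ∨ j c = j a + 1 := lay_adj hR hac
    by_cases e1 : j a = j b
    · exact key a b c hab hbc hac e1 h1 h2 h3
    by_cases e2 : j b = j c
    · exact key b c a hbc hac.symm hab.symm e2 h2 (dsymm _ _ h3) (dsymm _ _ h1)
    · exact key a c b hac hbc.symm hab (by omega) h3 (dsymm _ _ h2) h1

/-- A vertex of a clique with root set `R` that could be moved onto by the centre of a cone. -/
def IsBad (H : SimpleGraph V) (R : Set V) (d : V → V → Prop) (v : V) : Prop :=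
  (v ∈ R ∧ ∀ u, H.Adj v u → d v u) ∨
    (v ∉ R ∧ (∃ u, H.Adj v u ∧ ¬ d v u) ∧
      ∀ a b, H.Adj v a → H.Adj v b → ¬ d v a → ¬ d v b → a = b)

/-- The greedy colouring of a union of cliques with root set `R`. -/
def coneRed (R : Set V) (f : V → Ordinal.{u}) (u v : V) : Prop :=
  (u ∉ R ∧ v ∉ R ∧ OrderRed f u v) ∨ (u ∈ R ∧ v ∉ R ∧ (f v).parity = false) ∨
    (v ∈ R ∧ u ∉ R ∧ (f u).parity = false)

theorem coneRed_symm {R : Set V} {f : V → Ordinal.{u}} {u v : V} (h : coneRed R f u v) :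
    coneRed R f v u := by
  rcases h with ⟨h1, h2, h3⟩ | h | h
  · exact Or.inl ⟨h2, h1, h3.symm⟩
  · exact Or.inr (Or.inr h)
  · exact Or.inr (Or.inl h)

theorem coneRed_iff {R : Set V} {f : V → Ordinal.{u}} {u v : V} (hu : u ∉ R) (hv : v ∉ R) :
    coneRed R f u v ↔ OrderRed f u v := by
  simp [coneRed, hu, hv]

theorem coneRed_root_iff {R : Set V} {f : V → Ordinal.{u}} {u v : V} (hu : u ∈ R) (hv : v ∉ R) :
    coneRed R f u v ↔ (f v).parity = false := by
  simp [coneRed, hu, hv]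

/-- The edges of `H` avoiding `R`. -/
def avoid (H : SimpleGraph V) (R : Set V) : SimpleGraph V where
  Adj u v := H.Adj u v ∧ u ∉ R ∧ v ∉ R
  symm := ⟨fun _ _ h => ⟨h.1.symm, h.2.2, h.2.1⟩⟩
  loopless := ⟨fun _ h => h.1.ne rfl⟩

theorem rigid_coneRed {H : SimpleGraph V} {R : Set V} {f : V → Ordinal.{u}}
    (hf : IsGreedy (avoid H R) f) (hind : ∀ u ∈ R, ∀ v ∈ R, ¬ H.Adj u v)
    (hdom : ∀ v, v ∉ R → ∃ a ∈ R, H.Adj v a) : Rigid H R (coneRed R f) := by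
  intro φ hadj hd hφR v hv
  have char : ∀ v, (f v).parity = true ↔ ∃ u, H.Adj v u ∧ u ∈ R ∧ ¬ coneRed R f v u := by
    intro v
    constructor
    · intro h
      have hv : v ∉ R := by
        intro hv
        have : f v = 0 := by
          by_contra h0
          obtain ⟨u, hu, -⟩ := hf.exists_adj v 0 (pos_iff_ne_zero.2 h0)
          exact hu.2.1 hv
        rw [this, parity_zero] at h
        cases h
      obtain ⟨a, ha, hva⟩ := hdom v hv
      refine ⟨a, hva, ha, fun h' => ?_⟩
      rw [(coneRed_root_iff ha hv).1 (coneRed_symm h')] at h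
      cases h
    · rintro ⟨u, h1, h2, h3⟩
      have hv : v ∉ R := fun hv => hind v hv u h2 h1
      by_contra h
      exact h3 (coneRed_symm ((coneRed_root_iff h2 hv).2 (by simpa using h)))
  have hpar : ∀ v, (f (φ v)).parity = (f v).parity := by
    intro v
    apply eq_of_parity_iff
    rw [char, char, φ.surjective.exists]
    refine exists_congr fun u => ?_
    rw [hadj, hφR]
    exact and_congr_right fun h => and_congr_right fun _ => not_congr (hd _ _ h)
  have hadj2 : ∀ u v, (avoid H R).Adj (φ u) (φ v) ↔ (avoid H R).Adj u v := by
    intro u v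
    simp only [avoid, hadj, hφR]
  have hvR : v ∉ R := fun h => hind v h _ ((hφR v).2 h) hv
  refine hf.proper v (φ v) ⟨hv, hvR, fun h => hvR ((hφR v).1 h)⟩
    (hf.apply_eq φ hadj2 hpar ?_ v).symm
  intro u v h
  rw [← coneRed_iff h.2.1 h.2.2,
    ← coneRed_iff (fun h' => h.2.1 ((hφR u).1 h')) (fun h' => h.2.2 ((hφR v).1 h'))]
  exact hd _ _ h.1

theorem isBad_cases {H : SimpleGraph V} {R : Set V} {f : V → Ordinal.{u}}
    (hcl : ∀ a b c, H.Adj a b → H.Adj b c → a ≠ c → H.Adj a c)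
    (hf : IsGreedy (avoid H R) f) (hind : ∀ u ∈ R, ∀ v ∈ R, ¬ H.Adj u v)
    (hdom : ∀ v, v ∉ R → ∃ a ∈ R, H.Adj v a) {v : V} (hv : IsBad H R (coneRed R f) v) :
    (v ∈ R ∧ ∀ u, H.Adj v u → f u = 0) ∨
    (v ∉ R ∧ f v = 0 ∧ (∃ u, H.Adj v u ∧ u ∉ R ∧ f u = 1) ∧
      ∀ u, H.Adj v u → u ∉ R → f u = 1) ∨
    (v ∉ R ∧ f v = 1 + 1 ∧ (∃ u, H.Adj v u ∧ u ∉ R ∧ f u = 1) ∧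
      ∀ u, H.Adj v u → u ∉ R → f u = 0 ∨ f u = 1) := by
  have p1 : Ordinal.parity (1 : Ordinal.{u}) = true := by
    have := parity_add_one (0 : Ordinal.{u})
    rwa [zero_add, parity_zero] at this
  have p2 : Ordinal.parity (1 + 1 : Ordinal.{u}) = false := by
    rw [parity_add_one, p1]
    rfl
  have even_gt : ∀ a : Ordinal.{u}, a.parity = false → a ≠ 0 → 1 < a := by
    intro a h1 h2
    refine lt_of_le_of_ne (Order.one_le_iff_pos.2 (pos_iff_ne_zero.2 h2)) ?_
    rintro rfl
    rw [p1] at h1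
    cases h1
  rcases hv with ⟨hvR, hred⟩ | ⟨hvR, ⟨u0, hu0, hb0⟩, huniq⟩
  · refine Or.inl ⟨hvR, fun u hu => ?_⟩
    have huR : u ∉ R := fun h => hind v hvR u h hu
    have hpu := (coneRed_root_iff hvR huR).1 (hred u hu)
    by_contra h0
    obtain ⟨w, hw, hfw⟩ := hf.exists_adj u 1 (even_gt _ hpu h0)
    have hvw : H.Adj v w := hcl v u w hu hw.1 fun h => hw.2.2 (h ▸ hvR)
    have := (coneRed_root_iff hvR hw.2.2).1 (hred w hvw)
    rw [hfw, p1] at this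
    cases this
  · obtain ⟨a, ha, hva⟩ := hdom v hvR
    cases hp : (f v).parity with
    | true =>
      exfalso
      have h0 : f v ≠ 0 := fun h => by
        rw [h, parity_zero] at hp
        cases hp
      obtain ⟨u, hu, hfu⟩ := hf.exists_adj v 0 (pos_iff_ne_zero.2 h0)
      have := huniq a u hva hu.1
        (fun h => by
          rw [(coneRed_root_iff ha hvR).1 (coneRed_symm h)] at hp
          cases hp)
        (fun h => not_orderRed_of_eq_zero hfu ((coneRed_iff hvR hu.2.2).1 h).symm)
      exact hu.2.2 (this ▸ ha)
    | false =>
      by_cases h0 : f v = 0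
      · refine Or.inr (Or.inl ⟨hvR, h0, ?_⟩)
        have blue : ∀ u, u ∉ R → ¬ coneRed R f v u := fun u hu h =>
          not_orderRed_of_eq_zero h0 ((coneRed_iff hvR hu).1 h)
        have hu0R : u0 ∉ R := fun h =>
          hb0 (coneRed_symm ((coneRed_root_iff h hvR).2 hp))
        have all : ∀ u, H.Adj v u → u ∉ R → f u = 1 := by
          intro u hu huR
          have h1 : f v ≠ f u := hf.proper _ _ ⟨hu, hvR, huR⟩
          rw [h0] at h1
          by_contra h2
          obtain ⟨w, hw, hfw⟩ := hf.exists_adj u 1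
            (lt_of_le_of_ne (Order.one_le_iff_pos.2 (pos_iff_ne_zero.2 h1.symm)) (Ne.symm h2))
          have hvw : H.Adj v w := hcl v u w hu hw.1 fun h => by
            rw [← h, h0] at hfw
            exact zero_ne_one hfw
          exact hw.1.ne (huniq u w hu hvw (blue u huR) (blue w hw.2.2))
        exact ⟨⟨u0, hu0, hu0R, all u0 hu0 hu0R⟩, all⟩
      · refine Or.inr (Or.inr ⟨hvR, ?_⟩)
        have h1 := even_gt _ hp h0
        obtain ⟨u, hu, hfu⟩ := hf.exists_adj v 0 (pos_iff_ne_zero.2 h0)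
        have hub : ¬ coneRed R f v u := fun h =>
          not_orderRed_of_eq_zero hfu ((coneRed_iff hvR hu.2.2).1 h).symm
        have noblue : ∀ w, H.Adj v w → w ∉ R → f w ≠ 0 → OrderRed f v w := by
          intro w hw hwR hw0
          by_contra h
          have := huniq u w hu.1 hw hub fun h' => h ((coneRed_iff hvR hwR).1 h')
          exact hw0 (this ▸ hfu)
        have h2 : f v = 1 + 1 := by
          by_contra h2
          obtain ⟨w, hw, hfw⟩ := hf.exists_adj v (1 + 1)
            (lt_of_le_of_ne (Order.add_one_le_of_lt h1) (Ne.symm h2))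
          refine not_orderRed_of_parity_eq (by rw [hp, hfw, p2]) (noblue w hw.1 hw.2.2 ?_)
          rw [hfw]
          exact (zero_lt_one.trans (lt_add_one (1 : Ordinal.{u}))).ne'
        obtain ⟨w, hw, hfw⟩ := hf.exists_adj v 1 h1
        refine ⟨h2, ⟨w, hw.1, hw.2.2, hfw⟩, fun x hx hxR => ?_⟩
        by_cases hx0 : f x = 0
        · exact Or.inl hx0
        · rcases noblue x hx hxR hx0 with ⟨-, h3, h4⟩ | ⟨-, h3, -⟩
          · rw [h2] at h4
            refine Or.inr (le_antisymm (Order.lt_add_one_iff.1 h4) ?_)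
            exact Order.one_le_iff_pos.2 (pos_iff_ne_zero.2 hx0)
          · rw [hp] at h3
            cases h3

theorem exists_eq_of_subsingleton (v : V) (P : V → Prop) (h : ∀ u u', P u → P u' → u = u') :
    ∃ x, ∀ u, P u → u = x := by
  by_cases hP : ∃ x, P x
  · obtain ⟨x, hx⟩ := hP
    exact ⟨x, fun u hu => h u x hu hx⟩
  · exact ⟨v, fun u hu => absurd ⟨u, hu⟩ hP⟩

theorem exists_rigid_of_cliques (H : SimpleGraph V) (R : Set V)
    (hcl : ∀ a b c, H.Adj a b → H.Adj b c → a ≠ c → H.Adj a c)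
    (hind : ∀ u ∈ R, ∀ v ∈ R, ¬ H.Adj u v) (hdom : ∀ v, v ∉ R → ∃ a ∈ R, H.Adj v a) :
    ∃ d : V → V → Prop, (∀ u v, d u v → d v u) ∧ Rigid H R d ∧
      (∀ k ∈ R, (∃ u, H.Adj k u) → ∃ s, H.Adj k s ∧ d k s) ∧
      (∀ v v', IsBad H R d v → IsBad H R d v' → ¬ H.Adj v v') ∧
      (∀ v, IsBad H R d v → ∃ a b c e, ∀ u, u = v ∨ H.Adj v u →
        u = a ∨ u = b ∨ u = c ∨ u = e) := by
  obtain ⟨f, hf⟩ := exists_isGreedy (avoid H R)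
  refine ⟨coneRed R f, fun _ _ => coneRed_symm, rigid_coneRed hf hind hdom, ?_, ?_, ?_⟩
  · rintro k hk ⟨u, hu⟩
    have huR : u ∉ R := fun h => hind k hk u h hu
    by_cases h0 : f u = 0
    · exact ⟨u, hu, (coneRed_root_iff hk huR).2 (by rw [h0, parity_zero])⟩
    · obtain ⟨w, hw, hfw⟩ := hf.exists_adj u 0 (pos_iff_ne_zero.2 h0)
      exact ⟨w, hcl k u w hu hw.1 fun h => hw.2.2 (h ▸ hk),
        (coneRed_root_iff hk hw.2.2).2 (by rw [hfw, parity_zero])⟩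
  · intro v v' hv hv' hadj
    have key : ∀ v v', H.Adj v v' → v ∈ R → v' ∉ R → (∀ u, H.Adj v u → f u = 0) →
        (∃ u, H.Adj v' u ∧ u ∉ R ∧ f u = 1) → False := by
      rintro v v' hvv' hv hv' h ⟨u, hu, huR, hfu⟩
      have := h u (hcl v v' u hvv' hu fun e => huR (e ▸ hv))
      rw [hfu] at this
      exact one_ne_zero this
    have ne2 : (1 + 1 : Ordinal.{u}) ≠ 1 := (lt_add_one _).ne'
    rcases isBad_cases hcl hf hind hdom hv with ⟨h1, h2⟩ | ⟨h1, h2, h3, h4⟩ | ⟨h1, h2, h3, h4⟩ <;>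
    rcases isBad_cases hcl hf hind hdom hv' with ⟨k1, k2⟩ | ⟨k1, k2, k3, k4⟩ | ⟨k1, k2, k3, k4⟩
    · exact hind v h1 v' k1 hadj
    · exact key v v' hadj h1 k1 h2 k3
    · exact key v v' hadj h1 k1 h2 k3
    · exact key v' v hadj.symm k1 h1 k2 h3
    · exact hf.proper v v' ⟨hadj, h1, k1⟩ (h2.trans k2.symm)
    · exact ne2 (k2 ▸ h4 v' hadj k1)
    · exact key v' v hadj.symm k1 h1 k2 h3
    · exact ne2 (h2 ▸ k4 v hadj.symm h1)
    · exact hf.proper v v' ⟨hadj, h1, k1⟩ (h2.trans k2.symm)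
  · intro v hv
    have adj : ∀ u u', u = v ∨ H.Adj v u → u' = v ∨ H.Adj v u' → u ≠ u' → H.Adj u u' := by
      rintro u u' (rfl | h) (rfl | h') hne
      · exact absurd rfl hne
      · exact h'
      · exact h.symm
      · exact hcl u v u' h.symm h' hne
    have lev : ∀ o, ∃ x, ∀ u, ((u = v ∨ H.Adj v u) ∧ u ∉ R ∧ f u = o) → u = x := by
      intro o
      refine exists_eq_of_subsingleton v _ ?_
      rintro u u' ⟨h1, h2, h3⟩ ⟨k1, k2, k3⟩
      by_contra hne
      exact hf.proper u u' ⟨adj u u' h1 k1 hne, h2, k2⟩ (h3.trans k3.symm)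
    obtain ⟨a, ha⟩ : ∃ x, ∀ u, ((u = v ∨ H.Adj v u) ∧ u ∈ R) → u = x := by
      refine exists_eq_of_subsingleton v _ ?_
      rintro u u' ⟨h1, h2⟩ ⟨k1, k2⟩
      by_contra hne
      exact hind u h2 u' k2 (adj u u' h1 k1 hne)
    obtain ⟨b, hb⟩ := lev 0
    obtain ⟨c, hc⟩ := lev 1
    obtain ⟨e, he⟩ := lev (1 + 1)
    refine ⟨a, b, c, e, fun u hu => ?_⟩
    by_cases huR : u ∈ R
    · exact Or.inl (ha u ⟨hu, huR⟩)
    · have : f u = 0 ∨ f u = 1 ∨ f u = 1 + 1 := by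
        rcases isBad_cases hcl hf hind hdom hv with
          ⟨h1, h2⟩ | ⟨h1, h2, h3, h4⟩ | ⟨h1, h2, h3, h4⟩
        · rcases hu with rfl | hu
          · exact absurd h1 huR
          · exact Or.inl (h2 u hu)
        · rcases hu with rfl | hu
          · exact Or.inl h2
          · exact Or.inr (Or.inl (h4 u hu huR))
        · rcases hu with rfl | hu
          · exact Or.inr (Or.inr h2)
          · exact (h4 u hu huR).imp_right Or.inl
      rcases this with h | h | h
      · exact Or.inr (Or.inl (hb u ⟨hu, huR, h⟩))
      · exact Or.inr (Or.inr (Or.inl (hc u ⟨hu, huR, h⟩)))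
      · exact Or.inr (Or.inr (Or.inr (he u ⟨hu, huR, h⟩)))

/-- The edges of `G` inside the neighbourhood of `r`. -/
def inner₁ (G : SimpleGraph V) (r : V) : SimpleGraph V where
  Adj u v := G.Adj u v ∧ lay G {r} u = 1 ∧ lay G {r} v = 1
  symm := ⟨fun _ _ h => ⟨h.1.symm, h.2.2, h.2.1⟩⟩
  loopless := ⟨fun _ h => h.1.ne rfl⟩

/-- The edges of `G` inside the spheres of radius at least two around `r`. -/
def inner₂ (G : SimpleGraph V) (r : V) : SimpleGraph V where
  Adj u v := G.Adj u v ∧ lay G {r} u = lay G {r} v ∧ 2 ≤ lay G {r} u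
  symm := ⟨fun _ _ h => ⟨h.1.symm, h.2.1.symm, h.2.1 ▸ h.2.2⟩⟩
  loopless := ⟨fun _ h => h.1.ne rfl⟩

theorem reach_singleton {G : SimpleGraph V} (hG : G.Connected) (r : V) :
    ∀ v, ∃ a ∈ ({r} : Set V), G.Reachable a v :=
  fun v => ⟨r, rfl, hG.preconnected r v⟩

theorem lay_singleton_eq_zero {G : SimpleGraph V} (hG : G.Connected) {r v : V} :
    lay G {r} v = 0 ↔ v = r :=
  lay_eq_zero (reach_singleton hG r)

theorem lay_singleton_eq_one {G : SimpleGraph V} (hG : G.Connected) {r v : V} :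
    lay G {r} v = 1 ↔ G.Adj r v := by
  constructor
  · intro h
    obtain ⟨u, hu, hu'⟩ := exists_adj_lay (reach_singleton hG r) h
    rw [lay_singleton_eq_zero hG] at hu'
    exact hu' ▸ hu.symm
  · intro h
    have h1 := lay_le_add_one (reach_singleton hG r) h
    have h2 : lay G {r} r = 0 := (lay_singleton_eq_zero hG).2 rfl
    have h3 : lay G {r} v ≠ 0 := fun h3 => h.ne ((lay_singleton_eq_zero hG).1 h3).symm
    omega

theorem lay_singleton_adj {G : SimpleGraph V} (hG : G.Connected) {r u v : V} (h : G.Adj u v) :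
    lay G {r} u = lay G {r} v ∨ lay G {r} u = lay G {r} v + 1 ∨
      lay G {r} v = lay G {r} u + 1 :=
  lay_adj (reach_singleton hG r) h

/-- The data for colouring the edges of `G` outwards from the vertex `r`. -/
structure Scheme (G : SimpleGraph V) (r : V) where
  conn : G.Connected
  R₁ : Set V
  d₁ : V → V → Prop
  cliques : ∀ a b c, (inner₁ G r).Adj a b → (inner₁ G r).Adj b c → a ≠ c → (inner₁ G r).Adj a c
  indep : ∀ u ∈ R₁, ∀ v ∈ R₁, ¬ (inner₁ G r).Adj u v
  dom : ∀ v, v ∉ R₁ → ∃ a ∈ R₁, (inner₁ G r).Adj v a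
  symm₁ : ∀ u v, d₁ u v → d₁ v u
  rigid₁ : Rigid (inner₁ G r) R₁ d₁
  exists_red : ∀ k ∈ R₁, (∃ u, (inner₁ G r).Adj k u) → ∃ s, (inner₁ G r).Adj k s ∧ d₁ k s
  R₂ : Set V
  d₂ : V → V → Prop
  meets : ∀ v, ∃ a ∈ R₂, (inner₂ G r).Reachable a v
  unique : ∀ u ∈ R₂, ∀ v ∈ R₂, (inner₂ G r).Reachable u v → u = v
  symm₂ : ∀ u v, d₂ u v → d₂ v u
  rigid₂ : Rigid (inner₂ G r) R₂ d₂
  exists_open : ∀ v t, t ∈ R₂ → (inner₂ G r).Adj v t → d₂ v t →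
    ∃ w, w ∉ R₂ ∧ (inner₂ G r).Adj v w ∧ (inner₂ G r).Adj w t ∧ ¬ d₂ v w ∧
      ∀ t', (inner₂ G r).Adj v t' → (inner₂ G r).Adj t' w → ¬ (d₂ v t' ∧ d₂ t' w)
  exists_open_root : ∀ v ∈ R₂, (∃ u, (inner₂ G r).Adj v u) → ∃ w, (inner₂ G r).Adj v w ∧
    ¬ d₂ v w ∧ ∀ t, (inner₂ G r).Adj v t → (inner₂ G r).Adj t w → ¬ (d₂ v t ∧ d₂ t w)
  p : V → V
  parent : ∀ v, v ≠ r → G.Adj v (p v) ∧ lay G {r} v = lay G {r} (p v) + 1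

/-- Every blue edge at `v` is closed to a triangle by two red edges. -/
def Closed (G : SimpleGraph V) (Red : V → V → Prop) (v : V) : Prop :=
  ∀ b, G.Adj v b → ¬ Red v b → ∃ s, G.Adj v s ∧ G.Adj s b ∧ Red v s ∧ Red s b

/-- Properties of the colours around the root of a scheme. -/
structure IsCentre (G : SimpleGraph V) (Red : V → V → Prop) (v : V) : Prop where
  closed : Closed G Red v
  sep : ∀ b b', G.Adj v b → G.Adj v b' → ¬ Red v b → ¬ Red v b' → ¬ G.Adj b b'
  cover : ∀ s t, G.Adj v s → G.Adj v t → G.Adj s t → Red v s → Red v t →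
    ∃ b, G.Adj v b ∧ ¬ Red v b ∧ G.Adj b s

/-- The automorphism `φ` respects the red edges. -/
def Respects (G : SimpleGraph V) (Red : V → V → Prop) (φ : G ≃g G) : Prop :=
  ∀ u v, G.Adj u v → (Red (φ u) (φ v) ↔ Red u v)

theorem IsCentre.map {G : SimpleGraph V} {Red : V → V → Prop} {v : V} (h : IsCentre G Red v)
    {φ : G ≃g G} (hφ : Respects G Red φ) : IsCentre G Red (φ v) := by
  have hs := φ.surjective
  refine ⟨fun b => ?_, fun b b' => ?_, fun s t => ?_⟩
  · obtain ⟨b, rfl⟩ := hs b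
    rw [φ.map_adj_iff]
    intro h1 h2
    rw [hφ _ _ h1] at h2
    obtain ⟨s, h3, h4, h5, h6⟩ := h.closed b h1 h2
    exact ⟨φ s, φ.map_adj_iff.2 h3, φ.map_adj_iff.2 h4, (hφ _ _ h3).2 h5, (hφ _ _ h4).2 h6⟩
  · obtain ⟨b, rfl⟩ := hs b
    obtain ⟨b', rfl⟩ := hs b'
    simp only [φ.map_adj_iff]
    intro h1 h2 h3 h4
    rw [hφ _ _ h1] at h3
    rw [hφ _ _ h2] at h4
    exact h.sep b b' h1 h2 h3 h4
  · obtain ⟨s, rfl⟩ := hs s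
    obtain ⟨t, rfl⟩ := hs t
    simp only [φ.map_adj_iff]
    intro h1 h2 h3 h4 h5
    rw [hφ _ _ h1] at h4
    rw [hφ _ _ h2] at h5
    obtain ⟨b, h6, h7, h8⟩ := h.cover s t h1 h2 h3 h4 h5
    exact ⟨φ b, φ.map_adj_iff.2 h6, fun h => h7 ((hφ _ _ h6).1 h), φ.map_adj_iff.2 h8⟩

namespace Scheme

variable {G : SimpleGraph V} {r : V} (S : Scheme G r)

/-- The marked vertices of the neighbourhood of the root. -/
def M₁ (v : V) : Prop := v ∈ S.R₁ ∧ ∃ x, (inner₁ G r).Adj v x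

/-- The marked vertices of the spheres of radius at least two. -/
def M₂ (v : V) : Prop := v ∈ S.R₂ ∧ ∃ x, (inner₂ G r).Adj v x

/-- The red edges from `u` towards the root. -/
def RedDown (u v : V) : Prop :=
  lay G {r} u = lay G {r} v + 1 ∧
    ((lay G {r} u = 1 ∧ ¬ S.M₁ u) ∨ (2 ≤ lay G {r} u ∧ S.M₂ u ∧ v = S.p u))

/-- The red edges. -/
def Red (u v : V) : Prop :=
  (lay G {r} u = lay G {r} v ∧ lay G {r} u = 1 ∧ S.d₁ u v) ∨
    (lay G {r} u = lay G {r} v ∧ lay G {r} u ≠ 1 ∧ S.d₂ u v) ∨ S.RedDown u v ∨ S.RedDown v u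

theorem red_symm {u v : V} (h : S.Red u v) : S.Red v u := by
  rcases h with ⟨h1, h2, h3⟩ | ⟨h1, h2, h3⟩ | h | h
  · exact Or.inl ⟨h1.symm, h1 ▸ h2, S.symm₁ _ _ h3⟩
  · exact Or.inr (Or.inl ⟨h1.symm, h1 ▸ h2, S.symm₂ _ _ h3⟩)
  · exact Or.inr (Or.inr (Or.inr h))
  · exact Or.inr (Or.inr (Or.inl h))

theorem red_comm {u v : V} : S.Red u v ↔ S.Red v u := ⟨S.red_symm, S.red_symm⟩

theorem red_iff_one {u v : V} (h : (inner₁ G r).Adj u v) : S.Red u v ↔ S.d₁ u v := by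
  simp [Red, RedDown, h.2.1, h.2.2]

theorem red_iff_two {u v : V} (h : (inner₂ G r).Adj u v) : S.Red u v ↔ S.d₂ u v := by
  have := h.2.2
  have h1 : lay G {r} v ≠ 1 := by rw [← h.2.1]; omega
  simp [Red, RedDown, h.2.1, h1]

theorem red_iff_root {v : V} (h : G.Adj r v) : S.Red v r ↔ ¬ S.M₁ v := by
  simp [Red, RedDown, (lay_singleton_eq_one S.conn).2 h, (lay_singleton_eq_zero S.conn).2 rfl]

theorem red_iff_down {u v : V} (h : lay G {r} u = lay G {r} v + 1) (h2 : 2 ≤ lay G {r} u) :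
    S.Red u v ↔ S.M₂ u ∧ v = S.p u := by
  have h3 : lay G {r} v ≠ 0 := by omega
  have h4 : lay G {r} v + 1 ≠ 1 := by omega
  have h5 : lay G {r} v ≠ lay G {r} v + 1 + 1 := by omega
  have h6 : 2 ≤ lay G {r} v + 1 := by omega
  simp [Red, RedDown, h, h3, h5, h6]

theorem mem_R₁ {v : V} (h : ¬ ∃ x, (inner₁ G r).Adj v x) : v ∈ S.R₁ := by
  by_contra hv
  obtain ⟨a, -, ha⟩ := S.dom v hv
  exact h ⟨a, ha⟩

theorem mem_R₂ {v : V} (h : ¬ ∃ x, (inner₂ G r).Adj v x) : v ∈ S.R₂ := by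
  obtain ⟨a, ha, ⟨w⟩⟩ := S.meets v
  cases hw : w.reverse with
  | nil => exact ha
  | cons e _ => exact absurd ⟨_, e⟩ h

theorem not_adj_R₂ {u v : V} (hu : u ∈ S.R₂) (hv : v ∈ S.R₂) : ¬ (inner₂ G r).Adj u v :=
  fun h => h.ne (S.unique u hu v hv h.reachable)

theorem not_adj_apply {φ : G ≃g G} (hφ : Respects G S.Red φ) (hr : φ r = r) (v : V) :
    ¬ G.Adj v (φ v) := by
  have hr' : ∀ v, φ v = r ↔ v = r := fun v =>
    ⟨fun h => φ.injective (h.trans hr.symm), fun h => h ▸ hr⟩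
  have hl : ∀ v, lay G {r} (φ v) = lay G {r} v :=
    lay_apply (reach_singleton S.conn r) (φ := φ.toEquiv) (fun u v => φ.map_adj_iff) hr'
  have hadj₁ : ∀ u v, (inner₁ G r).Adj (φ u) (φ v) ↔ (inner₁ G r).Adj u v := fun u v => by
    simp only [inner₁, hl, φ.map_adj_iff]
  have hadj₂ : ∀ u v, (inner₂ G r).Adj (φ u) (φ v) ↔ (inner₂ G r).Adj u v := fun u v => by
    simp only [inner₂, hl, φ.map_adj_iff]
  have hex₁ : ∀ v, (∃ x, (inner₁ G r).Adj (φ v) x) ↔ ∃ x, (inner₁ G r).Adj v x := fun v => by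
    rw [φ.surjective.exists]
    exact exists_congr fun x => hadj₁ v x
  have hex₂ : ∀ v, (∃ x, (inner₂ G r).Adj (φ v) x) ↔ ∃ x, (inner₂ G r).Adj v x := fun v => by
    rw [φ.surjective.exists]
    exact exists_congr fun x => hadj₂ v x
  have hR₁ : ∀ v, φ v ∈ S.R₁ ↔ v ∈ S.R₁ := by
    intro v
    by_cases hv : ∃ x, (inner₁ G r).Adj v x
    · obtain ⟨x, hx⟩ := hv
      have h1 : G.Adj r v := (lay_singleton_eq_one S.conn).1 hx.2.1
      have h2 : G.Adj r (φ v) := (lay_singleton_eq_one S.conn).1 ((hl v).trans hx.2.1)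
      have := hφ v r h1.symm
      rw [hr, S.red_iff_root h1, S.red_iff_root h2, not_iff_not] at this
      unfold M₁ at this
      rw [hex₁] at this
      simpa [show ∃ x, (inner₁ G r).Adj v x from ⟨x, hx⟩] using this
    · exact iff_of_true (S.mem_R₁ fun h => hv ((hex₁ v).1 h)) (S.mem_R₁ hv)
  have hR₂ : ∀ v, φ v ∈ S.R₂ ↔ v ∈ S.R₂ := by
    intro v
    by_cases hv : ∃ x, (inner₂ G r).Adj v x
    · have char : ∀ v, (∃ x, (inner₂ G r).Adj v x) → (v ∈ S.R₂ ↔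
          ∃ u, G.Adj v u ∧ lay G {r} v = lay G {r} u + 1 ∧ S.Red v u) := by
        rintro v ⟨x, hx⟩
        constructor
        · intro h
          have := S.parent v fun h => by
            have h1 := (lay_singleton_eq_zero S.conn).2 h
            have := hx.2.2
            omega
          exact ⟨S.p v, this.1, this.2, (S.red_iff_down this.2 hx.2.2).2 ⟨⟨h, x, hx⟩, rfl⟩⟩
        · rintro ⟨u, h1, h2, h3⟩
          exact ((S.red_iff_down h2 hx.2.2).1 h3).1.1
      rw [char v hv, char _ ((hex₂ v).2 hv), φ.surjective.exists]
      refine exists_congr fun u => ?_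
      rw [φ.map_adj_iff, hl, hl]
      exact and_congr_right fun h => and_congr_right fun _ => hφ _ _ h
    · exact iff_of_true (S.mem_R₂ fun h => hv ((hex₂ v).1 h)) (S.mem_R₂ hv)
  intro hv
  rcases Nat.lt_trichotomy (lay G {r} v) 1 with h | h | h
  · have h0 := (lay_singleton_eq_zero S.conn).1 (Nat.lt_one_iff.1 h)
    rw [h0, hr] at hv
    exact hv.ne rfl
  · refine S.rigid₁ φ.toEquiv hadj₁ (fun u v h => ?_) hR₁ v ⟨hv, h, (hl v).trans h⟩
    exact ((S.red_iff_one ((hadj₁ u v).2 h)).symm.trans (hφ u v h.1)).trans (S.red_iff_one h)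
  · refine S.rigid₂ φ.toEquiv hadj₂ (fun u v h => ?_) hR₂ v ⟨hv, (hl v).symm, h⟩
    exact ((S.red_iff_two ((hadj₂ u v).2 h)).symm.trans (hφ u v h.1)).trans (S.red_iff_two h)

theorem isCentre : IsCentre G S.Red r := by
  have adj : ∀ {u v}, G.Adj r u → G.Adj r v → G.Adj u v → (inner₁ G r).Adj u v :=
    fun hu hv h => ⟨h, (lay_singleton_eq_one S.conn).2 hu, (lay_singleton_eq_one S.conn).2 hv⟩
  have radj : ∀ {u v}, (inner₁ G r).Adj u v → G.Adj r v :=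
    fun h => (lay_singleton_eq_one S.conn).1 h.2.2
  have blue : ∀ b, G.Adj r b → (¬ S.Red r b ↔ S.M₁ b) := fun b hb => by
    rw [S.red_comm, S.red_iff_root hb, not_not]
  refine ⟨fun b hb hb' => ?_, fun b b' hb hb' h h' hbb' => ?_, fun s t hs ht hst hs' ht' => ?_⟩
  · have hM := (blue b hb).1 hb'
    obtain ⟨s, hs, hs'⟩ := S.exists_red b hM.1 hM.2
    refine ⟨s, radj hs, hs.1.symm, ?_, S.red_symm ((S.red_iff_one hs).2 hs')⟩
    by_contra h
    exact S.indep b hM.1 s ((blue s (radj hs)).1 h).1 hs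
  · exact S.indep b ((blue b hb).1 h).1 b' ((blue b' hb').1 h').1 (adj hb hb' hbb')
  · have hsR : s ∉ S.R₁ := fun h => (blue s hs).2 ⟨h, t, adj hs ht hst⟩ hs'
    obtain ⟨a, ha, hsa⟩ := S.dom s hsR
    exact ⟨a, radj hsa, (blue a (radj hsa)).2 ⟨ha, s, hsa.symm⟩, hsa.1.symm⟩

theorem not_closed {v : V} (hv : 2 ≤ lay G {r} v) : ¬ Closed G S.Red v := by
  intro hcl
  have hvr : v ≠ r := fun h => by
    have := (lay_singleton_eq_zero S.conn).2 h
    omega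
  have up : ∀ w s, v ≠ w → lay G {r} v = lay G {r} w → lay G {r} s = lay G {r} v + 1 →
      S.Red v s → S.Red s w → False := by
    intro w s hne h h' h1 h2
    have e1 := (S.red_iff_down h' (by omega)).1 (S.red_symm h1)
    have e2 := (S.red_iff_down (h'.trans (by rw [h])) (by omega)).1 h2
    exact hne (e1.2.trans e2.2.symm)
  by_cases hM : S.M₂ v
  · obtain ⟨w, hw, hd, hno⟩ := S.exists_open_root v hM.1 hM.2
    obtain ⟨s, h1, h2, h3, h4⟩ := hcl w hw.1 fun h => hd ((S.red_iff_two hw).1 h)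
    rcases lay_singleton_adj (r := r) S.conn h1 with h | h | h
    · have a1 : (inner₂ G r).Adj v s := ⟨h1, h, hv⟩
      have a2 : (inner₂ G r).Adj s w := ⟨h2, h.symm.trans hw.2.1, h ▸ hv⟩
      exact hno s a1 a2 ⟨(S.red_iff_two a1).1 h3, (S.red_iff_two a2).1 h4⟩
    · have := (S.red_iff_down (u := w) (hw.2.1.symm.trans h) (hw.2.1 ▸ hv)).1 (S.red_symm h4)
      exact S.not_adj_R₂ hM.1 this.1.1 hw
    · exact up w s hw.1.ne hw.2.1 h h3 h4
  · obtain ⟨hp, hpl⟩ := S.parent v hvr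
    obtain ⟨s, h1, h2, h3, h4⟩ := hcl (S.p v) hp fun h => hM ((S.red_iff_down hpl hv).1 h).1
    have hsl : lay G {r} v = lay G {r} s := by
      rcases lay_singleton_adj (r := r) S.conn h1 with h | h | h
      · exact h
      · exact absurd ((S.red_iff_down h hv).1 h3).1 hM
      · rcases lay_singleton_adj (r := r) S.conn h2 with h' | h' | h' <;> omega
    have a1 : (inner₂ G r).Adj v s := ⟨h1, hsl, hv⟩
    have hs := (S.red_iff_down (hsl.symm.trans hpl) (hsl ▸ hv)).1 h4
    obtain ⟨w, -, hw, -, hd, hno⟩ := S.exists_open v s hs.1.1 a1 ((S.red_iff_two a1).1 h3)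
    obtain ⟨t, k1, k2, k3, k4⟩ := hcl w hw.1 fun h => hd ((S.red_iff_two hw).1 h)
    rcases lay_singleton_adj (r := r) S.conn k1 with h | h | h
    · have a1 : (inner₂ G r).Adj v t := ⟨k1, h, hv⟩
      have a2 : (inner₂ G r).Adj t w := ⟨k2, h.symm.trans hw.2.1, h ▸ hv⟩
      exact hno t a1 a2 ⟨(S.red_iff_two a1).1 k3, (S.red_iff_two a2).1 k4⟩
    · exact hM ((S.red_iff_down h hv).1 k3).1
    · exact up w t hw.1.ne hw.2.1 h k3 k4

theorem apply_eq_or_adj {φ : G ≃g G} (hφ : Respects G S.Red φ) : φ r = r ∨ G.Adj r (φ r) := by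
  by_contra! h
  refine S.not_closed (v := φ r) ?_ (S.isCentre.map hφ).closed
  rw [← lay_singleton_eq_one S.conn, ne_eq, ← lay_singleton_eq_zero S.conn] at h
  omega

theorem isBad_of_isCentre {v : V} (hv : IsCentre G S.Red v) (hne : ∃ x, (inner₁ G r).Adj v x) :
    IsBad (inner₁ G r) S.R₁ S.d₁ v := by
  obtain ⟨x, hx⟩ := hne
  have hrv : G.Adj r v := (lay_singleton_eq_one S.conn).1 hx.2.1
  have radj : ∀ {u v}, (inner₁ G r).Adj u v → G.Adj r v :=
    fun h => (lay_singleton_eq_one S.conn).1 h.2.2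
  by_cases hR : v ∈ S.R₁
  · refine Or.inl ⟨hR, fun u hu => ?_⟩
    by_contra hd
    exact hv.sep r u hrv.symm hu.1 (fun h => (S.red_iff_root hrv).1 h ⟨hR, x, hx⟩)
      (fun h => hd ((S.red_iff_one hu).1 h)) (radj hu)
  · refine Or.inr ⟨hR, ?_, fun u u' hu hu' hd hd' => ?_⟩
    · by_cases hd : S.d₁ v x
      · obtain ⟨b, h1, h2, h3⟩ := hv.cover r x hrv.symm hx.1 (radj hx)
          ((S.red_iff_root hrv).2 fun h => hR h.1) ((S.red_iff_one hx).2 hd)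
        have hb : (inner₁ G r).Adj v b := ⟨h1, hx.2.1, (lay_singleton_eq_one S.conn).2 h3.symm⟩
        exact ⟨b, hb, fun h => h2 ((S.red_iff_one hb).2 h)⟩
      · exact ⟨x, hx, hd⟩
    · by_contra hne
      exact hv.sep u u' hu.1 hu'.1 (fun h => hd ((S.red_iff_one hu).1 h))
        (fun h => hd' ((S.red_iff_one hu').1 h)) (S.cliques u v u' hu.symm hu' hne).1

end Scheme

theorem Respects.symm {G : SimpleGraph V} {Red : V → V → Prop} {φ : G ≃g G}
    (h : Respects G Red φ) : Respects G Red φ.symm := by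
  intro u v huv
  have := h (φ.symm u) (φ.symm v) (φ.symm.map_adj_iff.2 huv)
  simpa using this.symm

theorem section_meets {H : SimpleGraph V} {ρ : H.ConnectedComponent → V}
    (hρ : ∀ c, H.connectedComponentMk (ρ c) = c) (v : V) : ∃ a ∈ Set.range ρ, H.Reachable a v :=
  ⟨ρ (H.connectedComponentMk v), ⟨_, rfl⟩, SimpleGraph.ConnectedComponent.exact (hρ _)⟩

theorem section_unique {H : SimpleGraph V} {ρ : H.ConnectedComponent → V}
    (hρ : ∀ c, H.connectedComponentMk (ρ c) = c) :
    ∀ u ∈ Set.range ρ, ∀ v ∈ Set.range ρ, H.Reachable u v → u = v := by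
  rintro _ ⟨c, rfl⟩ _ ⟨c', rfl⟩ h
  have := SimpleGraph.ConnectedComponent.sound h
  rw [hρ, hρ] at this
  rw [this]

theorem exists_section_mem (H : SimpleGraph V) (w : V) :
    ∃ R : Set V, w ∈ R ∧ (∀ v, ∃ a ∈ R, H.Reachable a v) ∧
      ∀ u ∈ R, ∀ v ∈ R, H.Reachable u v → u = v := by
  classical
  have hρ : ∀ c : H.ConnectedComponent, H.connectedComponentMk
      (if c = H.connectedComponentMk w then w else Quot.out c) = c := by
    intro c
    split_ifs with h
    · exact h.symm
    · exact Quot.out_eq c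
  exact ⟨Set.range _, ⟨H.connectedComponentMk w, if_pos rfl⟩, section_meets hρ,
    section_unique hρ⟩

/-- The edges of `G` inside the spheres of positive radius around `A`. -/
def outer (G : SimpleGraph V) (A : Set V) : SimpleGraph V where
  Adj u v := G.Adj u v ∧ lay G A u = lay G A v ∧ lay G A u ≠ 0
  symm := ⟨fun _ _ h => ⟨h.1.symm, h.2.1.symm, h.2.1 ▸ h.2.2⟩⟩
  loopless := ⟨fun _ h => h.1.ne rfl⟩

/-- The red edges of `G` coloured outwards from the set `A`. -/
def outRed (G : SimpleGraph V) (A R : Set V) (d : V → V → Prop) (p : V → V) (u v : V) : Prop :=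
  (lay G A u = lay G A v ∧ (lay G A u = 0 ∨ d u v)) ∨
    (lay G A u = lay G A v + 1 ∧ u ∈ R ∧ v = p u) ∨
    (lay G A v = lay G A u + 1 ∧ v ∈ R ∧ u = p v)

theorem outRed_symm {G : SimpleGraph V} {A R : Set V} {d : V → V → Prop} {p : V → V}
    (hd : ∀ u v, d u v → d v u) (u v : V) (h : outRed G A R d p u v) : outRed G A R d p v u := by
  rcases h with ⟨h1, h2⟩ | h | h
  · exact Or.inl ⟨h1.symm, by rw [← h1]; exact h2.imp_right (hd _ _)⟩
  · exact Or.inr (Or.inr h)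
  · exact Or.inr (Or.inl h)

theorem outRed_iff {G : SimpleGraph V} {A R : Set V} {d : V → V → Prop} {p : V → V} {u v : V}
    (h : (outer G A).Adj u v) : outRed G A R d p u v ↔ d u v := by
  simp [outRed, h.2.1, h.2.1 ▸ h.2.2]

theorem outRed_iff_down {G : SimpleGraph V} {A R : Set V} {d : V → V → Prop} {p : V → V}
    {u v : V} (h : lay G A u = lay G A v + 1) : outRed G A R d p u v ↔ u ∈ R ∧ v = p u := by
  simp only [outRed, h]
  simp
  omega

theorem lay_eq_zero_of_outRed_triangle {G : SimpleGraph V} {A R : Set V} {d : V → V → Prop}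
    {p : V → V} (hA : ∀ v, ∃ a ∈ A, G.Reachable a v) (hd : ∀ u v, d u v → d v u)
    (hR : ∀ u ∈ R, ∀ v ∈ R, ¬ (outer G A).Adj u v)
    (htri : ∀ a b c, (outer G A).Adj a b → (outer G A).Adj b c → (outer G A).Adj a c →
      ¬ (d a b ∧ d b c ∧ d a c)) {a b c : V} (hab : G.Adj a b) (hbc : G.Adj b c)
    (hac : G.Adj a c) (h1 : outRed G A R d p a b) (h2 : outRed G A R d p b c)
    (h3 : outRed G A R d p a c) : lay G A a = 0 := by
  have sy := outRed_symm (G := G) (A := A) (R := R) (p := p) hd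
  have key : ∀ a b c, G.Adj a b → G.Adj b c → G.Adj a c → outRed G A R d p a b →
      outRed G A R d p b c → outRed G A R d p a c → lay G A a = lay G A b →
      lay G A a = 0 ∧ lay G A c = 0 := by
    intro a b c hab hbc hac h1 h2 h3 e
    rcases lay_adj hA hbc with h | h | h
    · by_cases h0 : lay G A a = 0
      · exact ⟨h0, by rw [← h, ← e, h0]⟩
      · have a1 : (outer G A).Adj a b := ⟨hab, e, h0⟩
        have a2 : (outer G A).Adj b c := ⟨hbc, h, e ▸ h0⟩
        have a3 : (outer G A).Adj a c := ⟨hac, e.trans h, h0⟩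
        exact absurd ⟨(outRed_iff a1).1 h1, (outRed_iff a2).1 h2, (outRed_iff a3).1 h3⟩
          (htri a b c a1 a2 a3)
    · have e1 := (outRed_iff_down h).1 h2
      have e2 := (outRed_iff_down (e.trans h)).1 h3
      exact absurd ⟨hab, e, by omega⟩ (hR a e2.1 b e1.1)
    · have e1 := (outRed_iff_down h).1 (sy _ _ h2)
      have e2 := (outRed_iff_down (h.trans (by rw [e]))).1 (sy _ _ h3)
      exact absurd (e2.2.trans e1.2.symm) hab.ne
  have l1 := lay_adj hA hab
  have l2 := lay_adj hA hbc
  have l3 := lay_adj hA hac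
  by_cases e1 : lay G A a = lay G A b
  · exact (key a b c hab hbc hac h1 h2 h3 e1).1
  by_cases e2 : lay G A b = lay G A c
  · exact (key b c a hbc hac.symm hab.symm h2 (sy _ _ h3) (sy _ _ h1) e2).2
  · exact (key a c b hac hbc.symm hab h3 (sy _ _ h2) h1 (by omega)).1

theorem fixed_of_pattern {x y z w : V} {φ : V → V} (hφ : Function.Injective φ)
    (hxy : x ≠ y) (hxz : x ≠ z) (hyz : y ≠ z)
    (hx : φ x = x ∨ φ x = y ∨ φ x = z) (hy : φ y = x ∨ φ y = y ∨ φ y = z)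
    (hz : φ z = x ∨ φ z = y ∨ φ z = z) {P : V → V → V → V → Prop}
    (hP : ∀ u a b c, P u a b c → P (φ u) (φ a) (φ b) (φ c)) (hw : P w x y z)
    (h1 : ∀ u, ¬ P u y x z) (h2 : ∀ u, ¬ P u z y x) (h3 : ∀ u, P u x z y → ∃ b, P b y z x)
    (h4 : ∀ u b, P u z x y → ¬ P b y z x) : φ x = x ∧ φ y = y ∧ φ z = z := by
  have nxy : φ x ≠ φ y := fun h => hxy (hφ h)
  have nxz : φ x ≠ φ z := fun h => hxz (hφ h)
  have nyz : φ y ≠ φ z := fun h => hyz (hφ h)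
  have hw1 := hP _ _ _ _ hw
  have hw2 := hP _ _ _ _ hw1
  rcases hx with hx | hx | hx <;> rcases hy with hy | hy | hy <;>
    first
    | exact absurd (hx.trans hy.symm) nxy
    | skip
  all_goals
    rcases hz with hz | hz | hz <;>
    first
    | exact absurd (hx.trans hz.symm) nxz
    | exact absurd (hy.trans hz.symm) nyz
    | skip
  · exact ⟨hx, hy, hz⟩
  · rw [hx, hy, hz] at hw1
    obtain ⟨b, hb⟩ := h3 _ hw1
    have := hP _ _ _ _ hb
    rw [hx, hy, hz] at this
    exact absurd this (h2 _)
  · rw [hx, hy, hz] at hw1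
    exact absurd hw1 (h1 _)
  · rw [hx, hy, hz] at hw1
    simp only [hx, hy, hz] at hw2
    exact absurd hw1 (h4 _ _ hw2)
  · rw [hx, hy, hz] at hw1
    simp only [hx, hy, hz] at hw2
    exact absurd hw2 (h4 _ _ hw1)
  · rw [hx, hy, hz] at hw1
    exact absurd hw1 (h2 _)

/-- There are red edges such that no automorphism respecting them is small. -/
def Distinguishable (G : SimpleGraph V) : Prop :=
  ∃ Red : V → V → Prop, (∀ u v, Red u v → Red v u) ∧
    ∀ φ : G ≃g G, Respects G Red φ → ∀ v, ¬ G.Adj v (φ v)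

theorem exists_parent {G : SimpleGraph V} {x y z : V}
    (hA : ∀ v, ∃ a ∈ ({x, y, z} : Set V), G.Reachable a v) (T : Prop) (u : V) :
    ∃ q, (lay G {x, y, z} u ≠ 0 → G.Adj u q ∧ lay G {x, y, z} u = lay G {x, y, z} q + 1) ∧
      (lay G {x, y, z} u = 1 →
        (G.Adj u x → G.Adj u y → ¬ G.Adj u z → q = x) ∧
        (G.Adj u x → ¬ G.Adj u y → G.Adj u z → (T ∧ q = x ∨ ¬ T ∧ q = z)) ∧
        (¬ G.Adj u x → G.Adj u y → G.Adj u z → q = y)) := by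
  have l0 : ∀ a ∈ ({x, y, z} : Set V), lay G {x, y, z} a = 0 := fun a ha => (lay_eq_zero hA).2 ha
  have hx := l0 x (by simp)
  have hy := l0 y (by simp)
  have hz := l0 z (by simp)
  by_cases h0 : lay G {x, y, z} u = 0
  · exact ⟨u, fun h => absurd h0 h, fun h => by omega⟩
  by_cases h1 : lay G {x, y, z} u = 1
  · by_cases ax : G.Adj u x
    · by_cases hT : T
      · exact ⟨x, fun _ => ⟨ax, by omega⟩, fun _ => ⟨fun _ _ _ => rfl,
          fun _ _ _ => Or.inl ⟨hT, rfl⟩, fun h => absurd ax h⟩⟩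
      · by_cases ay : G.Adj u y
        · exact ⟨x, fun _ => ⟨ax, by omega⟩, fun _ => ⟨fun _ _ _ => rfl,
            fun _ h => absurd ay h, fun h => absurd ax h⟩⟩
        · by_cases az : G.Adj u z
          · exact ⟨z, fun _ => ⟨az, by omega⟩, fun _ => ⟨fun _ h => absurd h ay,
              fun _ _ _ => Or.inr ⟨hT, rfl⟩, fun h => absurd ax h⟩⟩
          · exact ⟨x, fun _ => ⟨ax, by omega⟩, fun _ => ⟨fun _ _ _ => rfl,
              fun _ _ h => absurd h az, fun h => absurd ax h⟩⟩
    · by_cases ay : G.Adj u y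
      · exact ⟨y, fun _ => ⟨ay, by omega⟩, fun _ => ⟨fun h => absurd h ax,
          fun h => absurd h ax, fun _ _ _ => rfl⟩⟩
      · obtain ⟨q, hq, hq'⟩ := exists_adj_lay hA h1
        exact ⟨q, fun _ => ⟨hq, by omega⟩, fun _ => ⟨fun h => absurd h ax,
          fun h => absurd h ax, fun _ h => absurd h ay⟩⟩
  · obtain ⟨n, hn⟩ := Nat.exists_eq_succ_of_ne_zero h0
    obtain ⟨q, hq, hq'⟩ := exists_adj_lay hA hn
    exact ⟨q, fun _ => ⟨hq, by omega⟩, fun h => absurd h h1⟩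

theorem distinguishable_of_diamond {G : SimpleGraph V} (hG : G.Connected) {x y z w : V}
    (hxy : G.Adj x y) (hxz : G.Adj x z) (hyz : G.Adj y z) (hwx : G.Adj w x) (hwy : G.Adj w y)
    (hwz : w ≠ z) (hnwz : ¬ G.Adj w z) : Distinguishable G := by
  have hA : ∀ v, ∃ a ∈ ({x, y, z} : Set V), G.Reachable a v :=
    fun v => ⟨x, by simp, hG.preconnected x v⟩
  obtain ⟨R, hwR, hR, hR'⟩ := exists_section_mem (outer G {x, y, z}) w
  obtain ⟨d, hd, hrig, -, -, htri⟩ := exists_rigid_of_section _ R hR hR'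
  choose p hp hrule using exists_parent hA
    (∃ b ∈ R, lay G {x, y, z} b = 1 ∧ ¬ G.Adj b x ∧ G.Adj b y ∧ G.Adj b z)
  have l0 : ∀ {v}, lay G {x, y, z} v = 0 ↔ v = x ∨ v = y ∨ v = z := fun {v} => by
    rw [lay_eq_zero hA]
    simp
  have hlw : lay G {x, y, z} w = 1 := by
    have h1 := lay_le_add_one hA hwx.symm
    have h2 : lay G {x, y, z} x = 0 := l0.2 (Or.inl rfl)
    have h3 : lay G {x, y, z} w ≠ 0 := fun h => by
      rcases l0.1 h with h | h | h
      · exact hwx.ne h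
      · exact hwy.ne h
      · exact hwz h
    omega
  set Red := outRed G {x, y, z} R d p with hRed
  have sy : ∀ u v, Red u v → Red v u := outRed_symm hd
  refine ⟨Red, sy, fun φ hφ => ?_⟩
  have hind : ∀ u ∈ R, ∀ v ∈ R, ¬ (outer G {x, y, z}).Adj u v :=
    fun u hu v hv h => h.ne (hR' u hu v hv h.reachable)
  have inA : ∀ a b, lay G {x, y, z} a = 0 → lay G {x, y, z} b = 0 → Red a b :=
    fun a b ha hb => Or.inl ⟨ha.trans hb.symm, Or.inl ha⟩
  have lx := l0.2 (Or.inl rfl : x = x ∨ x = y ∨ x = z)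
  have ly := l0.2 (Or.inr (Or.inl rfl) : y = x ∨ y = y ∨ y = z)
  have lz := l0.2 (Or.inr (Or.inr rfl) : z = x ∨ z = y ∨ z = z)
  have stable : ∀ φ : G ≃g G, Respects G Red φ → ∀ v ∈ ({x, y, z} : Set V),
      φ v ∈ ({x, y, z} : Set V) := by
    intro φ hφ
    have hadj : ∀ {u v}, G.Adj u v → G.Adj (φ u) (φ v) := fun h => φ.map_adj_iff.2 h
    have r1 := (hφ _ _ hxy).2 (inA _ _ lx ly)
    have r2 := (hφ _ _ hxz).2 (inA _ _ lx lz)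
    have r3 := (hφ _ _ hyz).2 (inA _ _ ly lz)
    have tri : ∀ {a b c}, G.Adj a b → G.Adj b c → G.Adj a c → Red a b → Red b c → Red a c →
        a ∈ ({x, y, z} : Set V) := fun h1 h2 h3 k1 k2 k3 => (lay_eq_zero hA).1
      (lay_eq_zero_of_outRed_triangle hA hd hind htri h1 h2 h3 k1 k2 k3)
    rintro v (rfl | rfl | rfl)
    · exact tri (hadj hxy) (hadj hyz) (hadj hxz) r1 r3 r2
    · exact tri (hadj hxy.symm) (hadj hxz) (hadj hyz) (sy _ _ r1) r2 r3
    · exact tri (hadj hxz.symm) (hadj hxy) (hadj hyz.symm) (sy _ _ r2) r1 (sy _ _ r3)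
  have hφA : ∀ v, φ v ∈ ({x, y, z} : Set V) ↔ v ∈ ({x, y, z} : Set V) := fun v =>
    ⟨fun h => by simpa using stable φ.symm hφ.symm _ h, stable φ hφ v⟩
  have hl : ∀ v, lay G {x, y, z} (φ v) = lay G {x, y, z} v :=
    lay_apply hA (φ := φ.toEquiv) (fun u v => φ.map_adj_iff) hφA
  have hadj₂ : ∀ u v, (outer G {x, y, z}).Adj (φ u) (φ v) ↔ (outer G {x, y, z}).Adj u v :=
    fun u v => by simp only [outer, hl, φ.map_adj_iff]
  have hφp : ∀ v ∈ R, lay G {x, y, z} v ≠ 0 → φ v ∈ R ∧ φ (p v) = p (φ v) := by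
    intro v hv h0
    have h1 := hp v h0
    have h2 : Red v (p v) := (outRed_iff_down h1.2).2 ⟨hv, rfl⟩
    exact (outRed_iff_down (by rw [hl, hl, h1.2])).1 ((hφ _ _ h1.1).2 h2)
  have memR : ∀ v, lay G {x, y, z} v = 0 → v ∈ R := by
    intro v h0
    obtain ⟨a, ha, ⟨q⟩⟩ := hR v
    cases hq : q.reverse with
    | nil => exact ha
    | cons e _ => exact absurd h0 e.2.2
  have hφR : ∀ v, φ v ∈ R ↔ v ∈ R := by
    intro v
    by_cases h0 : lay G {x, y, z} v = 0
    · exact iff_of_true (memR _ ((hl v).trans h0)) (memR _ h0)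
    · refine ⟨fun h => ?_, fun h => (hφp v h h0).1⟩
      have h1 := hp (φ v) (by rwa [hl])
      have h2 : Red (φ v) (p (φ v)) := (outRed_iff_down h1.2).2 ⟨h, rfl⟩
      obtain ⟨u, hu⟩ := φ.surjective (p (φ v))
      rw [← hu] at h1 h2
      rw [hl, hl] at h1
      exact ((outRed_iff_down h1.2).1 ((hφ _ _ (φ.map_adj_iff.1 h1.1)).1 h2)).1
  have fixed : φ x = x ∧ φ y = y ∧ φ z = z := by
    refine fixed_of_pattern (w := w) φ.injective hxy.ne hxz.ne hyz.ne
      ((hφA x).2 (by simp)) ((hφA y).2 (by simp)) ((hφA z).2 (by simp))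
      (P := fun u a b c => (u ∈ R ∧ lay G {x, y, z} u = 1) ∧ (G.Adj u a ∧ G.Adj u b ∧
        ¬ G.Adj u c) ∧ p u = a) ?_ ?_ ?_ ?_ ?_ ?_
    · rintro u a b c ⟨⟨h1, h2⟩, h3, h4⟩
      have := hφp u h1 (by omega)
      exact ⟨⟨this.1, (hl u).trans h2⟩, by simpa only [φ.map_adj_iff] using h3,
        this.2.symm.trans (congrArg φ h4)⟩
    · exact ⟨⟨hwR, hlw⟩, ⟨hwx, hwy, hnwz⟩, (hrule w hlw).1 hwx hwy hnwz⟩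
    · rintro u ⟨⟨h1, h2⟩, ⟨h3, h4, h5⟩, h6⟩
      exact hxy.ne (((hrule u h2).1 h4 h3 h5).symm.trans h6)
    · rintro u ⟨⟨h1, h2⟩, ⟨h3, h4, h5⟩, h6⟩
      exact hyz.ne (((hrule u h2).2.2 h5 h4 h3).symm.trans h6)
    · rintro u ⟨⟨h1, h2⟩, ⟨h3, h4, h5⟩, h6⟩
      rcases (hrule u h2).2.1 h3 h5 h4 with ⟨⟨b, k1, k2, k3, k4, k5⟩, -⟩ | ⟨-, h⟩
      · exact ⟨b, ⟨k1, k2⟩, ⟨k4, k5, k3⟩, (hrule b k2).2.2 k3 k4 k5⟩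
      · exact absurd (h6.symm.trans h) hxz.ne
    · rintro u b ⟨⟨h1, h2⟩, ⟨h3, h4, h5⟩, h6⟩ ⟨⟨k1, k2⟩, ⟨k3, k4, k5⟩, k6⟩
      rcases (hrule u h2).2.1 h4 h5 h3 with ⟨-, h⟩ | ⟨h, -⟩
      · exact hxz.ne (h.symm.trans h6)
      · exact h ⟨b, k1, k2, k5, k3, k4⟩
  intro v hv
  by_cases h0 : lay G {x, y, z} v = 0
  · rcases l0.1 h0 with rfl | rfl | rfl
    · exact hv.ne fixed.1.symm
    · exact hv.ne fixed.2.1.symm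
    · exact hv.ne fixed.2.2.symm
  · refine hrig φ.toEquiv hadj₂ (fun u v h => ?_) hφR v ⟨hv, (hl v).symm, h0⟩
    exact ((outRed_iff ((hadj₂ u v).2 h)).symm.trans (hφ u v h.1)).trans (outRed_iff h)

theorem connected_induction {G : SimpleGraph V} (hG : G.Connected) {P : V → Prop} {r : V}
    (hr : P r) (h : ∀ u v, P u → G.Adj u v → P v) (u : V) : P u := by
  obtain ⟨w⟩ := hG.preconnected r u
  induction w with
  | nil => exact hr
  | cons e _ ih => exact ih (h _ _ hr e)

theorem eq_or_adj_of_reachable {H : SimpleGraph V}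
    (hcl : ∀ a b c, H.Adj a b → H.Adj b c → a ≠ c → H.Adj a c) {u v : V} (h : H.Reachable u v) :
    u = v ∨ H.Adj u v := by
  obtain ⟨w⟩ := h
  induction w with
  | nil => exact Or.inl rfl
  | @cons a b c e _ ih =>
    rcases ih with rfl | h
    · exact Or.inr e
    · by_cases hac : a = c
      · exact Or.inl hac
      · exact Or.inr (hcl a b c e h hac)

/-- Two triangles sharing an edge lie in a complete graph on four vertices. -/
def DiamondFree (G : SimpleGraph V) : Prop :=
  ∀ a b c e, G.Adj a b → G.Adj a c → G.Adj b c → G.Adj b e → G.Adj c e → a ≠ e → G.Adj a e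

theorem exists_scheme {G : SimpleGraph V} (hG : G.Connected) (hdf : DiamondFree G) (r : V) :
    ∃ S : Scheme G r,
      (∀ v v', IsBad (inner₁ G r) S.R₁ S.d₁ v → IsBad (inner₁ G r) S.R₁ S.d₁ v' →
        ¬ (inner₁ G r).Adj v v') ∧
      (∀ v, IsBad (inner₁ G r) S.R₁ S.d₁ v → ∃ a b c e, ∀ u, u = v ∨ (inner₁ G r).Adj v u →
        u = a ∨ u = b ∨ u = c ∨ u = e) := by
  have hcl : ∀ a b c, (inner₁ G r).Adj a b → (inner₁ G r).Adj b c → a ≠ c →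
      (inner₁ G r).Adj a c := by
    rintro a b c ⟨h1, h2, h3⟩ ⟨h4, h5, h6⟩ hne
    have ha := (lay_singleton_eq_one hG).1 h2
    have hb := (lay_singleton_eq_one hG).1 h3
    have hc := (lay_singleton_eq_one hG).1 h6
    exact ⟨hdf a r b c ha.symm h1 hb hc h4 hne, h2, h6⟩
  obtain ⟨R₁, -, h1, h2⟩ := exists_section_mem (inner₁ G r) r
  have indep : ∀ u ∈ R₁, ∀ v ∈ R₁, ¬ (inner₁ G r).Adj u v :=
    fun u hu v hv h => h.ne (h2 u hu v hv h.reachable)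
  have dom : ∀ v, v ∉ R₁ → ∃ a ∈ R₁, (inner₁ G r).Adj v a := by
    intro v hv
    obtain ⟨a, ha, hav⟩ := h1 v
    rcases eq_or_adj_of_reachable hcl hav with rfl | h
    · exact absurd ha hv
    · exact ⟨a, ha, h.symm⟩
  obtain ⟨d₁, k1, k2, k3, k4, k5⟩ := exists_rigid_of_cliques _ R₁ hcl indep dom
  obtain ⟨R₂, -, h3, h4⟩ := exists_section_mem (inner₂ G r) r
  obtain ⟨d₂, l1, l2, l3, l4, -⟩ := exists_rigid_of_section _ R₂ h3 h4
  have hp : ∀ v, ∃ u, v ≠ r → G.Adj v u ∧ lay G {r} v = lay G {r} u + 1 := by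
    intro v
    by_cases h : v = r
    · exact ⟨v, fun h' => absurd h h'⟩
    · rw [← lay_singleton_eq_zero hG] at h
      obtain ⟨n, hn⟩ := Nat.exists_eq_succ_of_ne_zero h
      obtain ⟨u, hu, hu'⟩ := exists_adj_lay (reach_singleton hG r) hn
      exact ⟨u, fun _ => ⟨hu, by omega⟩⟩
  choose p hp using hp
  exact ⟨⟨hG, R₁, d₁, hcl, indep, dom, k1, k2, k3, R₂, d₂, h3, h4, l1, l2, l3, l4, p, hp⟩, k4, k5⟩

theorem Scheme.exists_replace {G : SimpleGraph V} {r : V} (S : Scheme G r) (R₂ : Set V)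
    (h : ∀ v, ∃ a ∈ R₂, (inner₂ G r).Reachable a v)
    (h' : ∀ u ∈ R₂, ∀ v ∈ R₂, (inner₂ G r).Reachable u v → u = v) :
    ∃ S' : Scheme G r, S'.R₁ = S.R₁ ∧ S'.d₁ = S.d₁ ∧ S'.p = S.p ∧ S'.R₂ = R₂ := by
  obtain ⟨d₂, l1, l2, l3, l4, -⟩ := exists_rigid_of_section _ R₂ h h'
  exact ⟨⟨S.conn, S.R₁, S.d₁, S.cliques, S.indep, S.dom, S.symm₁, S.rigid₁, S.exists_red, R₂, d₂,
    h, h', l1, l2, l3, l4, S.p, S.parent⟩, rfl, rfl, rfl, rfl⟩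

theorem Scheme.distinguishable {G : SimpleGraph V} {r : V} (S : Scheme G r)
    (h : ∀ φ : G ≃g G, Respects G S.Red φ → ¬ G.Adj r (φ r)) : Distinguishable G := by
  refine ⟨S.Red, fun _ _ => S.red_symm, fun φ hφ => S.not_adj_apply hφ ?_⟩
  exact (S.apply_eq_or_adj hφ).resolve_right (h φ hφ)

theorem Scheme.lay_child {G : SimpleGraph V} {r : V} (S : Scheme G r) {v w : V}
    (hv : G.Adj r v) (hw : G.Adj v w) : w = r ∨ G.Adj r w ∨ lay G {r} w = 2 := by
  rw [← lay_singleton_eq_one S.conn] at hv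
  rw [← lay_singleton_eq_one S.conn, ← lay_singleton_eq_zero S.conn (r := r)]
  have := lay_singleton_adj S.conn (r := r) hw
  omega

theorem Scheme.red_child {G : SimpleGraph V} {r : V} (S : Scheme G r) (hdf : DiamondFree G)
    {v w : V} (hv : G.Adj r v) (hc : IsCentre G S.Red v) (hvw : G.Adj v w)
    (hw : lay G {r} w = 2) : S.M₂ w ∧ v = S.p w := by
  have hlv := (lay_singleton_eq_one S.conn).2 hv
  have down : ∀ {x}, lay G {r} x = 2 → (S.Red x v ↔ S.M₂ x ∧ v = S.p x) := fun h =>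
    S.red_iff_down (by omega) (by omega)
  rw [← down hw]
  by_contra hblue
  have hblue' : ¬ S.Red v w := fun h => hblue (S.red_symm h)
  obtain ⟨s, h1, h2, h3, h4⟩ := hc.closed w hvw hblue'
  have hrw : ¬ G.Adj r w := fun h => by
    have := (lay_singleton_eq_one S.conn).2 h
    omega
  have hrw' : r ≠ w := fun h => by
    have := (lay_singleton_eq_zero S.conn).2 h.symm
    omega
  rcases S.lay_child hv h1 with rfl | h | h
  · exact hrw h2
  · exact hrw (hdf r v s w hv h h1 hvw h2 hrw')
  · have hs := (down h).1 (S.red_symm h3)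
    have hws : (inner₂ G r).Adj w s := ⟨h2.symm, by omega, by omega⟩
    obtain ⟨x, hxR, hwx, hxs, hd, -⟩ := S.exists_open w s hs.1.1 hws
      ((S.red_iff_two hws).1 (S.red_symm h4))
    have hlx : lay G {r} x = 2 := hwx.2.1 ▸ hw
    have hvx : G.Adj v x := hdf v w s x hvw h1 h2.symm hwx.1 hxs.1.symm fun h => by
      rw [← h] at hlx
      omega
    exact hc.sep w x hvw hvx hblue' (fun h => hxR ((down hlx).1 (S.red_symm h)).1.1) hwx.1

theorem exists_scheme_unattainable {G : SimpleGraph V} (hG : G.Connected) (hdf : DiamondFree G)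
    (r s : V) : ∃ S : Scheme G r,
      (∀ v, IsBad (inner₁ G r) S.R₁ S.d₁ v → ∃ a b c e, ∀ u, u = v ∨ (inner₁ G r).Adj v u →
        u = a ∨ u = b ∨ u = c ∨ u = e) ∧
      (∀ v, IsBad (inner₁ G r) S.R₁ S.d₁ v → v = s ∨ (inner₁ G r).Adj v s →
        ∀ w ∈ S.R₂, S.p w = v → ∀ x, (inner₂ G r).Adj w x → S.p x = v) := by
  obtain ⟨S₀, hJ2, hJ3⟩ := exists_scheme hG hdf r
  obtain ⟨a, ha⟩ := exists_eq_of_subsingleton r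
    (fun v => IsBad (inner₁ G r) S₀.R₁ S₀.d₁ v ∧ (v = s ∨ (inner₁ G r).Adj v s)) (by
      rintro v v' ⟨h1, h2⟩ ⟨h3, h4⟩
      by_contra hne
      refine hJ2 v v' h1 h3 ?_
      rcases h2 with rfl | h2 <;> rcases h4 with rfl | h4
      · exact absurd rfl hne
      · exact h4.symm
      · exact h2
      · exact S₀.cliques v s v' h2 h4.symm hne)
  have hρ : ∀ c : (inner₂ G r).ConnectedComponent, ∃ v,
      (inner₂ G r).connectedComponentMk v = c ∧ (S₀.p v = a → ∀ v',
        (inner₂ G r).connectedComponentMk v' = c → S₀.p v' = a) := by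
    intro c
    by_cases h : ∃ v, (inner₂ G r).connectedComponentMk v = c ∧ S₀.p v ≠ a
    · obtain ⟨v, h1, h2⟩ := h
      exact ⟨v, h1, fun h => absurd h h2⟩
    · push Not at h
      obtain ⟨v, hv⟩ := c.exists_rep
      exact ⟨v, hv, fun _ => h⟩
  choose ρ hρ1 hρ2 using hρ
  obtain ⟨S, e1, e2, e3, e4⟩ := S₀.exists_replace _ (section_meets hρ1) (section_unique hρ1)
  refine ⟨S, ?_, ?_⟩
  · rw [e1, e2]
    exact hJ3
  · rw [e1, e2, e3, e4]
    rintro v hv hvs _ ⟨c, rfl⟩ hp x hx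
    rw [ha v ⟨hv, hvs⟩] at hp ⊢
    refine hρ2 c hp x ?_
    rw [← SimpleGraph.ConnectedComponent.sound hx.reachable, hρ1]

theorem distinguishable_of_triangle {G : SimpleGraph V} (hG : G.Connected)
    (hV : ¬ ∃ a b c d e : V, ∀ u, u = a ∨ u = b ∨ u = c ∨ u = d ∨ u = e) (hdf : DiamondFree G)
    {r s t : V} (hrs : G.Adj r s) (hrt : G.Adj r t) (hst : G.Adj s t)
    (hr : (∃ a b, G.Adj r a ∧ G.Adj r b ∧ a ≠ b ∧ ¬ G.Adj a b) ∨ ∀ u, u = r ∨ G.Adj r u) :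
    Distinguishable G := by
  obtain ⟨S, hJ3, hS⟩ := exists_scheme_unattainable hG hdf r s
  refine S.distinguishable fun φ hφ hv => ?_
  have hc := S.isCentre.map hφ
  set v := φ r with hvdef
  have hadj : ∀ {a b}, G.Adj a b → G.Adj (φ a) (φ b) := fun h => φ.map_adj_iff.2 h
  have one : ∀ {x}, lay G {r} x = 1 ↔ G.Adj r x := lay_singleton_eq_one hG
  have hlv := one.2 hv
  have child : ∀ w, G.Adj v w → lay G {r} w = 2 → S.M₂ w ∧ v = S.p w :=
    fun w => S.red_child hdf hv hc
  have nonadj : ∀ w w', G.Adj v w → lay G {r} w = 2 → G.Adj v w' → lay G {r} w' = 2 →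
      ¬ G.Adj w w' := fun w w' h1 h2 h3 h4 h =>
    S.not_adj_R₂ (child w h1 h2).1.1 (child w' h3 h4).1.1 ⟨h, by omega, by omega⟩
  have inside : ∀ a b, G.Adj v a → G.Adj v b → G.Adj a b → a = r ∨ (inner₁ G r).Adj v a := by
    intro a b h1 h2 h3
    have hne : lay G {r} a = 2 → r ≠ a ∧ ¬ G.Adj r a := fun h =>
      ⟨fun h' => by
        have := (lay_singleton_eq_zero hG).2 h'.symm
        omega, fun h' => by
        have := one.2 h'
        omega⟩
    rcases S.lay_child hv h1 with h | h | h
    · exact Or.inl h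
    · exact Or.inr ⟨h1, hlv, one.2 h⟩
    · exfalso
      rcases S.lay_child hv h2 with h' | h' | h'
      · exact (hne h).2 (h' ▸ h3.symm)
      · exact (hne h).2 (hdf r v b a hv h' h2 h1 h3.symm (hne h).1)
      · exact nonadj a b h1 h h2 h' h3
  have clique : ∀ a b, (a = r ∨ (inner₁ G r).Adj v a) → (b = r ∨ (inner₁ G r).Adj v b) →
      a ≠ b → G.Adj a b := by
    rintro a b (rfl | ha) (rfl | hb) hne
    · exact absurd rfl hne
    · exact one.1 hb.2.2
    · exact (one.1 ha.2.2).symm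
    · exact (S.cliques a v b ha.symm hb hne).1
  have hs' := inside _ _ (hadj hrs) (hadj hrt) (hadj hst)
  have ht' := inside _ _ (hadj hrt) (hadj hrs) (hadj hst.symm)
  have hx : ∃ x, (inner₁ G r).Adj v x := by
    rcases hs' with h | h
    · rcases ht' with h' | h'
      · exact absurd (φ.injective (h.trans h'.symm)) hst.ne
      · exact ⟨_, h'⟩
    · exact ⟨_, h⟩
  have hbad := S.isBad_of_isCentre hc hx
  by_cases hna : ∃ a b, G.Adj r a ∧ G.Adj r b ∧ a ≠ b ∧ ¬ G.Adj a b
  · obtain ⟨a, b, hra, hrb, hab, hnab⟩ := hna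
    obtain ⟨w, hvw, hlw⟩ : ∃ w, G.Adj v w ∧ lay G {r} w = 2 := by
      by_contra! hno
      have ins : ∀ a, G.Adj v a → a = r ∨ (inner₁ G r).Adj v a := by
        intro a ha
        rcases S.lay_child hv ha with h | h | h
        · exact Or.inl h
        · exact Or.inr ⟨ha, hlv, one.2 h⟩
        · exact absurd h (hno a ha)
      exact hnab (φ.map_adj_iff.1 (clique (φ a) (φ b) (ins _ (hadj hra)) (ins _ (hadj hrb))
        (fun h => hab (φ.injective h))))
    have hvs : v = s ∨ (inner₁ G r).Adj v s := by
      by_cases hvs : v = s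
      · exact Or.inl hvs
      · obtain ⟨x, hx⟩ := hx
        have hv' := inside _ _ (hadj hv) (hadj (one.1 hx.2.2)) (hadj hx.1)
        exact Or.inr ⟨φ.map_adj_iff.1 (clique _ _ hv' hs' fun h => hvs (φ.injective h)), hlv,
          one.2 hrs⟩
    obtain ⟨⟨hwR, x, hwx⟩, hp⟩ := child w hvw hlw
    have hpx := hS v hbad hvs w hwR hp.symm x hwx
    have hlx : lay G {r} x = 2 := hwx.2.1 ▸ hlw
    have hvx := (S.parent x fun h => by
      have := (lay_singleton_eq_zero hG).2 h
      omega).1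
    rw [hpx] at hvx
    exact nonadj w x hvw hlw hvx.symm hlx hwx.1
  · have hall := hr.resolve_left hna
    push Not at hna
    obtain ⟨a, b, c, e, h⟩ := hJ3 v hbad
    refine hV ⟨r, a, b, c, e, fun u => (hall u).imp_right fun hu => h u ?_⟩
    by_cases huv : u = v
    · exact Or.inl huv
    · exact Or.inr ⟨hna v u hv hu (Ne.symm huv), hlv, one.2 hu⟩

theorem exists_triangle_apex {G : SimpleGraph V} (hG : G.Connected) {a b c : V}
    (hab : G.Adj a b) (hac : G.Adj a c) (hbc : G.Adj b c) :
    ∃ r s t, G.Adj r s ∧ G.Adj r t ∧ G.Adj s t ∧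
      ((∃ a b, G.Adj r a ∧ G.Adj r b ∧ a ≠ b ∧ ¬ G.Adj a b) ∨ ∀ u, u = r ∨ G.Adj r u) := by
  by_contra! hno
  obtain ⟨-, u, hu1, hu2⟩ := hno a b c hab hac hbc
  have := connected_induction hG (P := fun u => u = a ∨ G.Adj a u) (Or.inl rfl) (by
    rintro u v (rfl | hu) huv
    · exact Or.inr huv
    · by_cases hva : v = a
      · exact Or.inl hva
      · obtain ⟨t, ht1, ht2⟩ : ∃ t, G.Adj a t ∧ G.Adj u t := by
          by_cases hub : u = b
          · exact ⟨c, hac, hub ▸ hbc⟩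
          · exact ⟨b, hab, (hno a b c hab hac hbc).1 u b hu hab hub⟩
        exact Or.inr ((hno u a t hu.symm ht2 ht1).1 a v hu.symm huv (Ne.symm hva))) u
  tauto

/-- A set `R` meeting every component of `H` exactly once. -/
def IsSection (H : SimpleGraph V) (R : Set V) : Prop :=
  (∀ v, ∃ a ∈ R, H.Reachable a v) ∧ ∀ u ∈ R, ∀ v ∈ R, H.Reachable u v → u = v

theorem IsSection.swap {H : SimpleGraph V} {R : Set V} (h : IsSection H R) {c w : V}
    (hc : c ∈ R) (hcw : H.Adj c w) : IsSection H (insert w (R \ {c})) := by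
  have key : ∀ u ∈ R, H.Reachable w u → u = c := fun u hu hwu =>
    (h.2 c hc u hu (hcw.reachable.trans hwu)).symm
  refine ⟨fun v => ?_, ?_⟩
  · obtain ⟨a, ha, hav⟩ := h.1 v
    by_cases hac : a = c
    · subst hac
      exact ⟨w, Set.mem_insert _ _, hcw.symm.reachable.trans hav⟩
    · exact ⟨a, Set.mem_insert_of_mem _ ⟨ha, hac⟩, hav⟩
  · rintro u (rfl | hu) v (rfl | hv) huv
    · rfl
    · exact absurd (key v hv.1 huv) hv.2
    · exact absurd (key u hu.1 huv.symm) hu.2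
    · exact h.2 u hu.1 v hv.1 huv

/-- The neighbours of `r` with several children, all of which are roots attached to them. -/
def Full (G : SimpleGraph V) (r : V) (p : V → V) (R : Set V) (v : V) : Prop :=
  G.Adj r v ∧ (∃ c c', c ≠ c' ∧ (G.Adj v c ∧ lay G {r} c = 2) ∧ G.Adj v c' ∧ lay G {r} c' = 2) ∧
    ∀ c, G.Adj v c → lay G {r} c = 2 → c ∈ R ∧ (∃ x, (inner₂ G r).Adj c x) ∧ p c = v

theorem exists_new_child {G : SimpleGraph V} {r : V} {p : V → V} {R R' : Set V} {v y w : V}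
    (huniq : ∀ u, Full G r p R u → u = v) (hy : Full G r p R' y) (hyv : y ≠ v)
    (hR' : ∀ u ∈ R', u = w ∨ u ∈ R) : G.Adj y w ∧ lay G {r} w = 2 ∧ p w = y := by
  by_contra hno
  refine hyv (huniq y ⟨hy.1, hy.2.1, fun c h1 h2 => ?_⟩)
  have h3 := hy.2.2 c h1 h2
  rcases hR' c h3.1 with rfl | h
  · exact absurd ⟨h1, h2, h3.2.2⟩ hno
  · exact ⟨h, h3.2⟩

theorem exists_section_full (G : SimpleGraph V) (r : V) (p : V → V) :
    ∃ R, IsSection (inner₂ G r) R ∧ ∀ v, Full G r p R v → ∃ u, Full G r p R u ∧ u ≠ v := by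
  by_contra! hno
  obtain ⟨R, -, h1, h2⟩ := exists_section_mem (inner₂ G r) r
  have hR : IsSection (inner₂ G r) R := ⟨h1, h2⟩
  obtain ⟨v, hv, huniq⟩ := hno R hR
  obtain ⟨-, ⟨c₁, c₂, hc, hc₁, hc₂⟩, hall⟩ := id hv
  obtain ⟨hR₁, ⟨w₁, hw₁⟩, hp₁⟩ := hall c₁ hc₁.1 hc₁.2
  obtain ⟨hR₂, ⟨w₂, hw₂⟩, hp₂⟩ := hall c₂ hc₂.1 hc₂.2
  have n₁ : w₁ ∉ R := fun h => hw₁.ne (h2 _ hR₁ _ h hw₁.reachable)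
  have n₂ : w₂ ∉ R := fun h => hw₂.ne (h2 _ hR₂ _ h hw₂.reachable)
  have n₁₂ : w₂ ≠ w₁ := fun h =>
    hc (h2 _ hR₁ _ hR₂ (hw₁.reachable.trans (h ▸ hw₂.symm.reachable)))
  have S₁ := hR.swap hR₁ hw₁
  have S₂ := hR.swap hR₂ hw₂
  have m₂ : c₂ ∈ insert w₁ (R \ {c₁}) := Set.mem_insert_of_mem _ ⟨hR₂, hc.symm⟩
  obtain ⟨y₁, hy₁, -⟩ := hno _ S₁
  obtain ⟨y₂, hy₂, -⟩ := hno _ S₂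
  obtain ⟨z, hz, hzuniq⟩ := hno _ (S₁.swap m₂ hw₂)
  have v₁ : y₁ ≠ v := by
    rintro rfl
    rcases (hy₁.2.2 c₁ hc₁.1 hc₁.2).1 with h | h
    · exact hw₁.ne h
    · exact h.2 rfl
  have v₂ : y₂ ≠ v := by
    rintro rfl
    rcases (hy₂.2.2 c₂ hc₂.1 hc₂.2).1 with h | h
    · exact hw₂.ne h
    · exact h.2 rfl
  have e₁ := exists_new_child (w := w₁) huniq hy₁ v₁ fun u hu => hu.imp_right fun h => h.1
  have e₂ := exists_new_child (w := w₂) huniq hy₂ v₂ fun u hu => hu.imp_right fun h => h.1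
  have hne : y₁ ≠ y₂ := by
    rintro rfl
    rcases (hy₁.2.2 w₂ e₂.1 e₂.2.1).1 with h | h
    · exact n₁₂ h
    · exact n₂ h.1
  have f₁ : y₁ = z := by
    refine hzuniq _ ⟨hy₁.1, hy₁.2.1, fun c k1 k2 => ?_⟩
    have h := hy₁.2.2 c k1 k2
    refine ⟨Set.mem_insert_of_mem _ ⟨h.1, fun h' => ?_⟩, h.2⟩
    rw [Set.mem_singleton_iff] at h'
    subst h'
    exact v₁ (h.2.2.symm.trans hp₂)
  have f₂ : y₂ = z := by
    refine hzuniq _ ⟨hy₂.1, hy₂.2.1, fun c k1 k2 => ?_⟩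
    have h := hy₂.2.2 c k1 k2
    refine ⟨?_, h.2⟩
    rcases h.1 with h' | h'
    · exact Or.inl h'
    · refine Or.inr ⟨Or.inr ⟨h'.1, fun h'' => ?_⟩, h'.2⟩
      rw [Set.mem_singleton_iff] at h''
      subst h''
      exact v₂ (h.2.2.symm.trans hp₁)
  exact hne (f₁.trans f₂.symm)

theorem red_of_closed {G : SimpleGraph V} {Red : V → V → Prop}
    (htf : ∀ a b c, G.Adj a b → G.Adj b c → ¬ G.Adj a c) {v w : V} (h : Closed G Red v)
    (hvw : G.Adj v w) : Red v w := by
  by_contra hd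
  obtain ⟨s, h1, h2, -⟩ := h w hvw hd
  exact htf v s w h1 h2 hvw

theorem distinguishable_of_triangle_free {G : SimpleGraph V} (hG : G.Connected)
    (htf : ∀ a b c, G.Adj a b → G.Adj b c → ¬ G.Adj a c) {r a₁ a₂ a₃ : V} (h1 : G.Adj r a₁)
    (h2 : G.Adj r a₂) (h3 : G.Adj r a₃) (h12 : a₁ ≠ a₂) (h13 : a₁ ≠ a₃) (h23 : a₂ ≠ a₃) :
    Distinguishable G := by
  obtain ⟨S₀, -⟩ := exists_scheme hG (fun a b c _ hab hac hbc => absurd hac (htf a b c hab hbc)) r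
  obtain ⟨R, hR, hfull⟩ := exists_section_full G r S₀.p
  obtain ⟨S, -, -, hp, hSR⟩ := S₀.exists_replace R hR.1 hR.2
  rw [← hp, ← hSR] at hfull
  refine S.distinguishable fun φ hφ hv => ?_
  have hc := (S.isCentre.map hφ).closed
  have hlv := (lay_singleton_eq_one hG).2 hv
  have child : ∀ x, G.Adj r x → φ x ≠ r → G.Adj (φ r) (φ x) ∧ lay G {r} (φ x) = 2 := by
    intro x hx hne
    have h := φ.map_adj_iff.2 hx
    refine ⟨h, ((S.lay_child hv h).resolve_left hne).resolve_left fun h' => ?_⟩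
    exact htf r (φ r) (φ x) hv h h'
  obtain ⟨u, hu, hne⟩ := hfull (φ r) (by
    refine ⟨hv, ?_, fun c hc1 hc2 => ?_⟩
    · have key : ∀ x y, G.Adj r x → G.Adj r y → x ≠ y → φ x ≠ r → φ y ≠ r →
          ∃ c c', c ≠ c' ∧ (G.Adj (φ r) c ∧ lay G {r} c = 2) ∧ G.Adj (φ r) c' ∧
            lay G {r} c' = 2 := fun x y hx hy hxy hx' hy' =>
        ⟨φ x, φ y, fun h => hxy (φ.injective h), child x hx hx', child y hy hy'⟩
      have inj : ∀ {x y}, x ≠ y → φ x = r → φ y ≠ r := fun hxy hx hy =>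
        hxy (φ.injective (hx.trans hy.symm))
      by_cases k1 : φ a₁ = r
      · exact key a₂ a₃ h2 h3 h23 (inj h12 k1) (inj h13 k1)
      · by_cases k2 : φ a₂ = r
        · exact key a₁ a₃ h1 h3 h13 k1 (inj h23 k2)
        · exact key a₁ a₂ h1 h2 h12 k1 k2
    · obtain ⟨⟨k1, k2⟩, k3⟩ := (S.red_iff_down (u := c) (v := φ r) (by omega) (by omega)).1
        (S.red_symm (red_of_closed htf hc hc1))
      exact ⟨k1, k2, k3.symm⟩)
  have huc : Closed G S.Red u := by
    intro b hub hd
    exfalso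
    apply hd
    rcases S.lay_child hu.1 hub with h | h | h
    · rw [h, S.red_iff_root hu.1]
      rintro ⟨-, x, hx⟩
      exact htf r u x hu.1 hx.1 ((lay_singleton_eq_one hG).1 hx.2.2)
    · exact absurd h (htf r u b hu.1 hub)
    · have k := hu.2.2 b hub h
      have hlu := (lay_singleton_eq_one hG).2 hu.1
      exact S.red_symm ((S.red_iff_down (u := b) (v := u) (by omega) (by omega)).2
        ⟨⟨k.1, k.2.1⟩, k.2.2.symm⟩)
  have hx : Closed G S.Red (φ.symm u) := by
    intro b hub hd
    have hub' : G.Adj u (φ b) := by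
      have := φ.map_adj_iff.2 hub
      rwa [φ.apply_symm_apply] at this
    have hred := red_of_closed htf huc hub'
    have := hφ _ _ hub
    rw [φ.apply_symm_apply] at this
    exact absurd (this.1 hred) hd
  have hx1 : G.Adj r (φ.symm u) := by
    have h := mt (S.not_closed (v := φ.symm u)) (not_not.2 hx)
    rw [← lay_singleton_eq_one hG]
    have h0 : lay G {r} (φ.symm u) ≠ 0 := fun h0 => by
      have := congrArg φ ((lay_singleton_eq_zero hG).1 h0)
      rw [φ.apply_symm_apply] at this
      exact hne this
    omega
  have := φ.map_adj_iff.2 hx1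
  rw [φ.apply_symm_apply] at this
  exact htf r (φ r) u hv this hu.1

theorem distinguishable_of_degree_le_two {G : SimpleGraph V} (hG : G.Connected)
    (hV : ¬ ∃ a b c d e : V, ∀ u, u = a ∨ u = b ∨ u = c ∨ u = d ∨ u = e)
    (htf : ∀ a b c, G.Adj a b → G.Adj b c → ¬ G.Adj a c)
    (hdeg : ∀ v a b c, G.Adj v a → G.Adj v b → G.Adj v c → a = b ∨ a = c ∨ b = c) :
    Distinguishable G := by
  obtain ⟨r, a, b, hra, hrb, hab⟩ : ∃ r a b, G.Adj r a ∧ G.Adj r b ∧ a ≠ b := by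
    by_contra! hno
    obtain ⟨r⟩ := hG.nonempty
    obtain ⟨s, hs⟩ := exists_eq_of_subsingleton r (G.Adj r) fun a b => hno r a b
    refine hV ⟨r, s, s, s, s, fun u => ?_⟩
    have := connected_induction hG (P := fun u => u = r ∨ G.Adj r u) (Or.inl rfl) (by
      rintro u v (rfl | hu) huv
      · exact Or.inr huv
      · exact Or.inl (hno u v r huv hu.symm)) u
    exact this.imp_right fun h => Or.inl (hs u h)
  have noedge : ∀ u w, G.Adj u w → lay G {r} u = 2 → lay G {r} w = 2 → False := by
    intro u w huw hu hw
    obtain ⟨x, hux, hx⟩ := exists_adj_lay (reach_singleton hG r) (n := 1) hu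
    obtain ⟨y, hwy, hy⟩ := exists_adj_lay (reach_singleton hG r) (n := 1) hw
    have hrx := (lay_singleton_eq_one hG).1 hx
    have hry := (lay_singleton_eq_one hG).1 hy
    have hr := (lay_singleton_eq_zero hG (r := r) (v := r)).2 rfl
    have hxy : x ≠ y := by
      rintro rfl
      exact htf x u w hux.symm huw hwy.symm
    have two : ∀ v a b c, G.Adj v a → G.Adj v b → a ≠ b → G.Adj v c → c = a ∨ c = b := by
      intro v a b c ha hb hab hc
      have := hdeg v a b c ha hb hc
      tauto
    have hur : u ≠ r := by rintro rfl; omega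
    have hwr : w ≠ r := by rintro rfl; omega
    have huy : u ≠ y := by rintro rfl; omega
    have hwx : w ≠ x := by rintro rfl; omega
    refine hV ⟨r, x, y, u, w, connected_induction hG (r := r) (Or.inl rfl) ?_⟩
    rintro a b (rfl | rfl | rfl | rfl | rfl) h
    · rcases two _ _ _ _ hrx hry hxy h with h | h <;> simp [h]
    · rcases two _ _ _ _ hux.symm hrx.symm hur h with h | h <;> simp [h]
    · rcases two _ _ _ _ hwy.symm hry.symm hwr h with h | h <;> simp [h]
    · rcases two _ _ _ _ huw hux hwx h with h | h <;> simp [h]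
    · rcases two _ _ _ _ huw.symm hwy huy h with h | h <;> simp [h]
  obtain ⟨S, -⟩ := exists_scheme hG (fun a b c _ hab hac hbc => absurd hac (htf a b c hab hbc)) r
  refine S.distinguishable fun φ hφ hv => ?_
  have hc := (S.isCentre.map hφ).closed
  have hlv := (lay_singleton_eq_one hG).2 hv
  have child : ∀ x, G.Adj r x → φ x = r := by
    intro x hx
    have h := φ.map_adj_iff.2 hx
    rcases S.lay_child hv h with h' | h' | h'
    · exact h'
    · exact absurd h' (htf r (φ r) (φ x) hv h)
    · obtain ⟨⟨-, y, hy⟩, -⟩ := (S.red_iff_down (u := φ x) (v := φ r) (by omega) (by omega)).1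
        (S.red_symm (red_of_closed htf hc h))
      exact absurd h' fun h' => noedge _ _ hy.1 h' (hy.2.1 ▸ h')
  exact hab (φ.injective ((child a hra).trans (child b hrb).symm))

theorem not_exists_cover {V : Type*} (hcard : 6 ≤ Cardinal.mk V) :
    ¬ ∃ a b c d e : V, ∀ u, u = a ∨ u = b ∨ u = c ∨ u = d ∨ u = e := by
  rintro ⟨a, b, c, d, e, h⟩
  have hs : Function.Surjective ![a, b, c, d, e] := by
    intro u
    rcases h u with rfl | rfl | rfl | rfl | rfl
    exacts [⟨0, rfl⟩, ⟨1, rfl⟩, ⟨2, rfl⟩, ⟨3, rfl⟩, ⟨4, rfl⟩]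
  have := Finite.of_surjective _ hs
  have h5 := Nat.card_le_card_of_surjective _ hs
  rw [Nat.card_fin] at h5
  rw [← Nat.cast_card, ← Nat.cast_ofNat, Nat.cast_le] at hcard
  omega

theorem distinguishable {G : SimpleGraph V} (hG : G.Connected) (hcard : 6 ≤ Cardinal.mk V) :
    Distinguishable G := by
  have hV := not_exists_cover hcard
  by_cases hdf : DiamondFree G
  · by_cases htf : ∀ a b c, G.Adj a b → G.Adj b c → ¬ G.Adj a c
    · by_cases hdeg : ∀ v a b c, G.Adj v a → G.Adj v b → G.Adj v c → a = b ∨ a = c ∨ b = c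
      · exact distinguishable_of_degree_le_two hG hV htf hdeg
      · push Not at hdeg
        obtain ⟨r, a, b, c, h1, h2, h3, h12, h13, h23⟩ := hdeg
        exact distinguishable_of_triangle_free hG htf h1 h2 h3 h12 h13 h23
    · push Not at htf
      obtain ⟨a, b, c, hab, hbc, hac⟩ := htf
      obtain ⟨r, s, t, hrs, hrt, hst, hr⟩ := exists_triangle_apex hG hab hac hbc
      exact distinguishable_of_triangle hG hV hdf hrs hrt hst hr
  · unfold DiamondFree at hdf
    push Not at hdf
    obtain ⟨a, b, c, e, hab, hac, hbc, hbe, hce, hae, hn⟩ := hdf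
    exact distinguishable_of_diamond hG hbc hab.symm hac.symm hbe.symm hce.symm hae.symm
      fun h => hn h.symm

end SmallIndex

/-- **Main theorem.** Every finite or infinite connected graph on at least 6 vertices
admits an edge colouring with 2 colours breaking every small automorphism,
i.e. `D'_s(G) ≤ 2`. -/
theorem small_distinguishing_index_le_two {V : Type*} (G : SimpleGraph V)
    (hconn : G.Connected) (hcard : 6 ≤ Cardinal.mk V) :
    ∃ c : Sym2 V → Fin 2, ∀ φ : G ≃g G, IsSmall G φ → Breaks G c φ := by
  classical
  obtain ⟨Red, hsymm, hRed⟩ := SmallIndex.distinguishable hconn hcard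
  refine ⟨fun e => if e ∈ Sym2.fromRel (r := Red) ⟨hsymm⟩ then 1 else 0, fun φ ⟨v, hv⟩ hφ => ?_⟩
  refine hRed φ (fun u w huw => ?_) v hv
  have h := hφ u w huw
  simp only [Sym2.fromRel_prop] at h
  by_cases h1 : Red (φ u) (φ w) <;> by_cases h2 : Red u w <;> simp_all
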